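/- arXiv:1709.07112 — 3 statements merged into one kernel-verified Lean document; each statement's English description precedes it below -/
import Mathlib

section
/- Fix n ≥ 1 and dimensions n_j, m. For i = 1, …, n let H_i : [0,∞) → ℝ^{n_j×n_j} be continuously differentiable with H_i(t) symmetric for all t and H_i'(t) = C_i(t) + C_i(t)ᵀ for a continuous C_i : [0,∞) → ℝ^{n_j×n_j}, let K_{D_i} ∈ ℝ^{n_j×n_j} be symmetric positive definite, and let Y_i : [0,∞) → ℝ^{n_j×m} be continuous. Let P ∈ ℝ^{m×m} be symmetric positive definite. Suppose differentiable functions s_i : [0,∞) → ℝ^{n_j} and a shared parameter error ã : [0,∞) → ℝ^m satisfy H_i(t)ṡ_i(t) + (C_i(t) + K_{D_i})s_i(t) = Y_i(t)ã(t) for each i and the centralized update law ã̇(t) = −P ∑_{i=1}^n Y_i(t)ᵀs_i(t). Then the function V(t) = (1/2)ã(t)ᵀP⁻¹ã(t) + (1/2)∑_{i=1}^n s_i(t)ᵀH_i(t)s_i(t) is differentiable with V'(t) = −∑_{i=1}^n s_i(t)ᵀK_{D_i}s_i(t) ≤ 0 for all t ≥ 0. -/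
open Matrix MeasureTheory Filter Topology

/-!
The derivative of a quadratic form `xᵀ M x` with `M` symmetric is `2 xᵀ M x' + xᵀ M' x`
(`hasDerivWithinAt_half_quadForm`). For `M = H i`, the identity `H' = C + Cᵀ` gives
`sᵀ H' s = 2 sᵀ C s`, so half the derivative of `sᵀ H s` is
`sᵀ (H s' + C s) = sᵀ (Y ã - K_D s)` by the error dynamics. For the constant matrix `P⁻¹` the update
law yields `ãᵀ P⁻¹ ã' = -ãᵀ ∑ Yᵀ s`, which cancels the terms `sᵀ Y ã` and leaves
`-∑ sᵀ K_D s`; this is nonpositive because each `K_D` is positive definite.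
-/

/-- Half the quadratic form of a symmetric matrix function, whose derivative is the symmetrization
`C + Cᵀ`, has derivative `xᵀ (M x' + C x)`. The matrix function is differentiated entrywise, so that
no norm on matrices is needed. -/
theorem hasDerivWithinAt_half_quadForm {k : ℕ} {M : ℝ → Matrix (Fin k) (Fin k) ℝ}
    {C : Matrix (Fin k) (Fin k) ℝ} {x : ℝ → Fin k → ℝ} {dx : Fin k → ℝ} {S : Set ℝ} {t : ℝ}
    (hsymm : (M t).IsSymm)
    (hM : ∀ a b, HasDerivWithinAt (fun τ => M τ a b) ((C + Cᵀ) a b) S t)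
    (hx : HasDerivWithinAt x dx S t) :
    HasDerivWithinAt (fun τ => (1/2) * (x τ ⬝ᵥ (M τ *ᵥ x τ)))
      (x t ⬝ᵥ (M t *ᵥ dx + C *ᵥ x t)) S t := by
  have hx' := hasDerivWithinAt_pi.1 hx
  have key : HasDerivWithinAt (fun τ => x τ ⬝ᵥ (M τ *ᵥ x τ))
      (∑ a, (dx a * ∑ b, M t a b * x t b +
        x t a * ∑ b, ((C + Cᵀ) a b * x t b + M t a b * dx b))) S t := by
    simp only [dotProduct, mulVec]
    exact HasDerivWithinAt.fun_sum fun a _ => (hx' a).mul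
      (HasDerivWithinAt.fun_sum fun b _ => (hM a b).mul (hx' b))
  refine (key.const_mul (1/2)).congr_deriv ?_
  have e1 : (∑ a, (dx a * ∑ b, M t a b * x t b +
      x t a * ∑ b, ((C + Cᵀ) a b * x t b + M t a b * dx b))) =
      dx ⬝ᵥ (M t *ᵥ x t) + x t ⬝ᵥ ((C + Cᵀ) *ᵥ x t + M t *ᵥ dx) := by
    simp only [dotProduct, mulVec, Pi.add_apply, Finset.sum_add_distrib]
  have e2 : dx ⬝ᵥ (M t *ᵥ x t) = x t ⬝ᵥ (M t *ᵥ dx) := by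
    rw [dotProduct_mulVec, ← mulVec_transpose, hsymm.eq, dotProduct_comm]
  have e3 : x t ⬝ᵥ (Cᵀ *ᵥ x t) = x t ⬝ᵥ (C *ᵥ x t) := by
    rw [mulVec_transpose, dotProduct_comm, ← dotProduct_mulVec]
  rw [e1, e2, add_mulVec, dotProduct_add, dotProduct_add, dotProduct_add, e3]
  ring

/-- for `n` manipulators with closed-loop error dynamics
`H_i ṡ_i + (C_i + K_{D_i}) s_i = Y_i ã` and the centralized update law
`ã̇ = −P ∑ᵢ Y_iᵀ s_i`, the Lyapunov function
`V = (1/2) ãᵀ P⁻¹ ã + (1/2) ∑ᵢ s_iᵀ H_i s_i` is differentiable with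
`V' = −∑ᵢ s_iᵀ K_{D_i} s_i ≤ 0` for all `t ≥ 0`. -/
theorem centralized_lyapunov_derivative (n nj m : ℕ) (hn : 1 ≤ n)
    (H C : Fin n → ℝ → Matrix (Fin nj) (Fin nj) ℝ)
    (KD : Fin n → Matrix (Fin nj) (Fin nj) ℝ)
    (Y : Fin n → ℝ → Matrix (Fin nj) (Fin m) ℝ)
    (P : Matrix (Fin m) (Fin m) ℝ)
    (s ds : Fin n → ℝ → Fin nj → ℝ) (at' : ℝ → Fin m → ℝ)
    -- each `H i t` is symmetric, continuously differentiable with `H' = C + Cᵀ`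
    (hHsymm : ∀ i t, 0 ≤ t → (H i t).IsSymm)
    (hHd : ∀ i, ∀ t, 0 ≤ t → ∀ a b,
      HasDerivWithinAt (fun τ => H i τ a b) ((C i t + (C i t)ᵀ) a b) (Set.Ici 0) t)
    (hCc : ∀ i a b, ContinuousOn (fun t => C i t a b) (Set.Ici 0))
    (hYc : ∀ i a b, ContinuousOn (fun t => Y i t a b) (Set.Ici 0))
    -- the gains are symmetric positive definite
    (hKD : ∀ i, (KD i).PosDef) (hP : P.PosDef)
    -- closed-loop tracking error dynamics
    (hs : ∀ i, ∀ t, 0 ≤ t → HasDerivWithinAt (s i) (ds i t) (Set.Ici 0) t)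
    (hdyn : ∀ i, ∀ t, 0 ≤ t →
      H i t *ᵥ ds i t + (C i t + KD i) *ᵥ s i t = Y i t *ᵥ at' t)
    -- centralized parameter update law
    (hat : ∀ t, 0 ≤ t →
      HasDerivWithinAt at' (-(P *ᵥ ∑ i, (Y i t)ᵀ *ᵥ s i t)) (Set.Ici 0) t) :
    ∀ t, 0 ≤ t →
      HasDerivWithinAt
        (fun τ => (1/2) * (at' τ ⬝ᵥ (P⁻¹ *ᵥ at' τ)) +
          (1/2) * ∑ i, s i τ ⬝ᵥ (H i τ *ᵥ s i τ))
        (-(∑ i, s i t ⬝ᵥ (KD i *ᵥ s i t))) (Set.Ici 0) t ∧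
      -(∑ i, s i t ⬝ᵥ (KD i *ᵥ s i t)) ≤ 0 := by
  intro t ht
  refine ⟨?_, ?_⟩
  · have hA := hasDerivWithinAt_half_quadForm (M := fun _ => P⁻¹) (C := 0)
      (by simpa [IsSymm] using hP.inv.isHermitian.eq)
      (fun a b => by simpa using hasDerivWithinAt_const t (Set.Ici 0) (P⁻¹ a b)) (hat t ht)
    have hB := HasDerivWithinAt.fun_sum (u := Finset.univ) fun i _ =>
      hasDerivWithinAt_half_quadForm (hHsymm i t ht) (hHd i t ht) (hs i t ht)
    simp only [← Finset.mul_sum] at hB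
    refine (hA.add hB).congr_deriv ?_
    have hPu : IsUnit P.det := (isUnit_iff_isUnit_det P).1 hP.isUnit
    have e : ∀ i, s i t ⬝ᵥ (H i t *ᵥ ds i t + C i t *ᵥ s i t) =
        at' t ⬝ᵥ ((Y i t)ᵀ *ᵥ s i t) - s i t ⬝ᵥ (KD i *ᵥ s i t) := by
      intro i
      have h : H i t *ᵥ ds i t + C i t *ᵥ s i t = Y i t *ᵥ at' t - KD i *ᵥ s i t := by
        rw [← hdyn i t ht, add_mulVec]
        abel
      rw [h, dotProduct_sub, dotProduct_mulVec, mulVec_transpose, dotProduct_comm (at' t)]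
    simp only [e, Finset.sum_sub_distrib, zero_mulVec, add_zero, mulVec_neg, mulVec_mulVec,
      nonsing_inv_mul P hPu, one_mulVec, dotProduct_neg, dotProduct_sum]
    ring
  · refine neg_nonpos.2 (Finset.sum_nonneg fun i _ => ?_)
    simpa using (hKD i).posSemidef.dotProduct_mulVec_nonneg (s i t)
end

section
/- Fix dimensions n_j, m. Let H : [0,∞) → ℝ^{n_j×n_j} be continuously differentiable with H(t) symmetric and μI ⪯ H(t) ⪯ MI for constants 0 < μ ≤ M; let C : [0,∞) → ℝ^{n_j×n_j} be continuous and bounded with H'(t) = C(t) + C(t)ᵀ for all t; let K_D ∈ ℝ^{n_j×n_j} and P ∈ ℝ^{m×m} be symmetric positive definite; and let Y : [0,∞) → ℝ^{n_j×m} be continuously differentiable with Y and Y' bounded. Suppose differentiable functions s : [0,∞) → ℝ^{n_j} and ã : [0,∞) → ℝ^m satisfy H(t)ṡ(t) + (C(t) + K_D)s(t) = Y(t)ã(t) and ã̇(t) = −P Y(t)ᵀ s(t). If Y is persistently exciting, then s(t) → 0 and ã(t) → 0 as t → ∞. -/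
/-! The Lyapunov function `V = sᵀ H s + ãᵀ P⁻¹ ã` satisfies `V' = -2 sᵀ K_D s`, because
`H' = C + Cᵀ` cancels the Coriolis terms and the update law cancels `sᵀ Y ã`. Hence `s` and `ã`
are bounded, the dynamics bound `ṡ`, and Barbalat's argument (`tendsto_zero_of_dissipation`)
gives `s → 0`.

For `ã`, the cross term `w = (Y ã)ᵀ H s` has derivative `|Y ã|² + O(|s|)` and is itself `O(|s|)`,
so the integral of `|Y ã|²` over a window `[t, t+T]` tends to `0`; only the first derivatives of
`Y` and `s` enter. Since `ã' = O(|s|)`, the parameter error is nearly constant on the window, so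
`∫ |Y(τ) ã(t)|² dτ → 0` as well, and persistency of excitation (`PEWith.le_integral`) bounds this
integral below by `α T |ã(t)|²`.

Norms on `ℝⁿ` are sup norms, compared with `x ⬝ᵥ x` where needed. "Bounded by a multiple of `g` on
`[0, ∞)`" is expressed as `=O[𝓟 (Set.Ici 0)] g`. -/

open Matrix MeasureTheory Filter Topology

/-- The (unnormalized) integral of the Gram matrix `Wᵀ W` over the window `[t, t+T]`. -/
noncomputable def gramInt {P : Type} [Fintype P] {m : ℕ}
    (W : ℝ → Matrix P (Fin m) ℝ) (t T : ℝ) : Matrix (Fin m) (Fin m) ℝ :=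
  Matrix.of fun a b => ∫ τ in t..(t + T), ((W τ)ᵀ * W τ) a b

/-- `W` is persistently exciting with window `T` and excitation level `α`. -/
def PEWith {P : Type} [Fintype P] {m : ℕ}
    (W : ℝ → Matrix P (Fin m) ℝ) (T α : ℝ) : Prop :=
  ∀ t, 0 ≤ t →
    (T⁻¹ • gramInt W t T - α • (1 : Matrix (Fin m) (Fin m) ℝ)).PosSemidef

/-! ### Scalar differential inequalities -/

/-- Mean value inequality for one-sided derivatives on the half-line. -/
lemma sub_le_of_deriv_le {f f' : ℝ → ℝ} {a b K : ℝ} (ha : 0 ≤ a) (hab : a ≤ b)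
    (hf : ∀ t, 0 ≤ t → HasDerivWithinAt f (f' t) (Set.Ici 0) t)
    (hK : ∀ t ∈ Set.Ico a b, f' t ≤ K) : f b - f a ≤ K * (b - a) := by
  have hsub : ∀ x ∈ Set.Ico a b, HasDerivWithinAt f (f' x) (Set.Ici x) x := fun x hx =>
    (hf x (ha.trans hx.1)).mono (Set.Ici_subset_Ici.2 (ha.trans hx.1))
  have hB : ∀ x, HasDerivAt (fun y => f a + K * (y - a)) K x := fun x => by
    simpa using (((hasDerivAt_id x).sub_const a).const_mul K).const_add (f a)
  have := image_le_of_deriv_right_le_deriv_boundary (f := f) (f' := f') (a := a) (b := b)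
    (fun x hx => ((hf x (ha.trans hx.1)).continuousWithinAt).mono
      (fun y hy => ha.trans hy.1)) hsub (B := fun y => f a + K * (y - a)) (B' := fun _ => K)
    (by simp) (fun x _ => (hB x).continuousAt.continuousWithinAt)
    (fun x _ => (hB x).hasDerivWithinAt) hK (Set.right_mem_Icc.2 hab)
  linarith

/-- A form of Barbalat's lemma: if `V ≥ 0` dissipates at rate at least `q ≥ 0`, and `q`
cannot decrease faster than at rate `L`, then `q → 0`. -/
lemma tendsto_zero_of_dissipation {V V' q q' : ℝ → ℝ} {L : ℝ} (hL : 0 ≤ L)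
    (hV : ∀ t, 0 ≤ t → HasDerivWithinAt V (V' t) (Set.Ici 0) t)
    (hV' : ∀ t, 0 ≤ t → V' t ≤ -q t) (hV0 : ∀ t, 0 ≤ t → 0 ≤ V t)
    (hq0 : ∀ t, 0 ≤ t → 0 ≤ q t)
    (hq : ∀ t, 0 ≤ t → HasDerivWithinAt q (q' t) (Set.Ici 0) t)
    (hq' : ∀ t, 0 ≤ t → -L ≤ q' t) : Tendsto q atTop (𝓝 0) := by
  rw [Metric.tendsto_atTop]
  intro ε hε
  set δ := ε / (2 * (L + 1)) with hδ
  have hδ0 : 0 < δ := by positivity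
  have hLδ : L * δ ≤ ε / 2 := by
    have : (L + 1) * δ = ε / 2 := by rw [hδ]; field_simp
    nlinarith
  have hbdd : BddBelow (V '' Set.Ici 0) := ⟨0, by rintro _ ⟨t, ht, rfl⟩; exact hV0 t ht⟩
  obtain ⟨_, ⟨t₀, ht₀, rfl⟩, hlt⟩ := exists_lt_of_csInf_lt (s := V '' Set.Ici 0)
    (b := sInf (V '' Set.Ici 0) + δ * (ε / 2)) (Set.nonempty_Ici.image _)
    (by linarith [mul_pos hδ0 (half_pos hε)])
  have ht₀ : 0 ≤ t₀ := ht₀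
  refine ⟨t₀, fun t ht => ?_⟩
  have ht : t₀ ≤ t := ht
  have ht0 : 0 ≤ t := ht₀.trans ht
  rw [Real.dist_eq, sub_zero, abs_of_nonneg (hq0 t ht0)]
  have h1 : V t - V t₀ ≤ 0 * (t - t₀) := sub_le_of_deriv_le ht₀ ht hV fun τ hτ => by
    have h0 : 0 ≤ τ := ht₀.trans hτ.1
    linarith [hV' τ h0, hq0 τ h0]
  have h2 : V (t + δ) - V t ≤ -(q t - L * δ) * (t + δ - t) :=
    sub_le_of_deriv_le ht0 (by linarith) hV fun τ hτ => by
      have h0 : 0 ≤ τ := ht0.trans hτ.1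
      have h3 := sub_le_of_deriv_le (f := fun x => -q x) (K := L) ht0 hτ.1
        (fun x hx => (hq x hx).fun_neg)
        (fun x hx => by linarith [hq' x (ht0.trans hx.1)])
      have h4 : L * (τ - t) ≤ L * δ := mul_le_mul_of_nonneg_left (by linarith [hτ.2]) hL
      linarith [hV' τ h0]
  have h3 : sInf (V '' Set.Ici 0) ≤ V (t + δ) :=
    csInf_le hbdd ⟨t + δ, by simp only [Set.mem_Ici]; linarith, rfl⟩
  have h4 : (q t - L * δ) * δ < (ε / 2) * δ := by nlinarith
  have := lt_of_mul_lt_mul_right h4 hδ0.le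
  linarith

/-! ### Derivatives and growth of matrix-vector products -/

lemma HasDerivWithinAt.dotProduct_aux {ι : Type*} [Fintype ι] {u v : ℝ → ι → ℝ} {u' v' : ι → ℝ}
    {S : Set ℝ} {t : ℝ} (hu : HasDerivWithinAt u u' S t) (hv : HasDerivWithinAt v v' S t) :
    HasDerivWithinAt (fun x => u x ⬝ᵥ v x) (u' ⬝ᵥ v t + u t ⬝ᵥ v') S t := by
  simp only [dotProduct, ← Finset.sum_add_distrib]
  exact HasDerivWithinAt.fun_sum fun i _ =>
    (hasDerivWithinAt_pi.1 hu i).fun_mul (hasDerivWithinAt_pi.1 hv i)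

lemma HasDerivWithinAt.mulVec_aux {ι κ : Type*} [Fintype ι] [Fintype κ]
    {A : ℝ → Matrix ι κ ℝ} {A' : Matrix ι κ ℝ}
    {v : ℝ → κ → ℝ} {v' : κ → ℝ} {S : Set ℝ} {t : ℝ}
    (hA : ∀ a b, HasDerivWithinAt (fun x => A x a b) (A' a b) S t)
    (hv : HasDerivWithinAt v v' S t) :
    HasDerivWithinAt (fun x => A x *ᵥ v x) (A' *ᵥ v t + A t *ᵥ v') S t := by
  rw [hasDerivWithinAt_pi]
  intro i
  exact HasDerivWithinAt.dotProduct_aux (u := fun x => A x i) (hasDerivWithinAt_pi.2 (hA i)) hv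

lemma isBigO_dotProduct {ι : Type*} [Fintype ι] {l : Filter ℝ} {u v : ℝ → ι → ℝ} {g h : ℝ → ℝ}
    (hu : u =O[l] g) (hv : v =O[l] h) :
    (fun t => u t ⬝ᵥ v t) =O[l] fun t => g t * h t :=
  Asymptotics.IsBigO.fun_sum fun i _ =>
    (Asymptotics.isBigO_pi.1 hu i).mul (Asymptotics.isBigO_pi.1 hv i)

lemma isBigO_mulVec {ι κ : Type*} [Fintype ι] [Fintype κ] {l : Filter ℝ}
    {A : ℝ → Matrix ι κ ℝ} {v : ℝ → κ → ℝ} {h : ℝ → ℝ}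
    (hA : ∀ a b, (fun t => A t a b) =O[l] fun _ => (1 : ℝ)) (hv : v =O[l] h) :
    (fun t => A t *ᵥ v t) =O[l] h := by
  rw [Asymptotics.isBigO_pi]
  intro i
  have := isBigO_dotProduct (u := fun t => A t i) (g := fun _ => 1)
    (Asymptotics.isBigO_pi.2 (hA i)) hv
  simp only [one_mul] at this
  exact this

/-! ### Bounds for quadratic forms -/

lemma norm_sq_le_dotProduct {ι : Type*} [Fintype ι] (x : ι → ℝ) : ‖x‖ ^ 2 ≤ x ⬝ᵥ x := by
  have h0 : 0 ≤ x ⬝ᵥ x := Finset.sum_nonneg fun i _ => mul_self_nonneg (x i)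
  have : ‖x‖ ≤ √(x ⬝ᵥ x) := by
    rw [pi_norm_le_iff_of_nonneg (Real.sqrt_nonneg _)]
    intro i
    rw [Real.norm_eq_abs]
    apply Real.abs_le_sqrt
    rw [sq]
    exact Finset.single_le_sum (f := fun i => x i * x i) (fun i _ => mul_self_nonneg (x i))
      (Finset.mem_univ i)
  calc ‖x‖ ^ 2 ≤ √(x ⬝ᵥ x) ^ 2 := by gcongr
    _ = x ⬝ᵥ x := Real.sq_sqrt h0

lemma abs_dotProduct_le {ι : Type*} [Fintype ι] (x y : ι → ℝ) :
    |x ⬝ᵥ y| ≤ Fintype.card ι * (‖x‖ * ‖y‖) := by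
  refine (Finset.abs_sum_le_sum_abs _ _).trans ?_
  refine (Finset.sum_le_card_nsmul _ _ (‖x‖ * ‖y‖) fun i _ => ?_).trans ?_
  · rw [abs_mul]
    exact mul_le_mul (norm_le_pi_norm x i) (norm_le_pi_norm y i) (abs_nonneg _) (norm_nonneg _)
  · simp

/-- Positive definite forms are coercive, by compactness of the unit sphere. -/
lemma exists_coercive {ι : Type*} [Fintype ι] {A : Matrix ι ι ℝ} (hA : A.PosDef) :
    ∃ c > 0, ∀ x : ι → ℝ, c * ‖x‖ ^ 2 ≤ x ⬝ᵥ A *ᵥ x := by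
  have hcont : Continuous fun x : ι → ℝ => x ⬝ᵥ A *ᵥ x := by fun_prop
  have hpos : ∀ x : ι → ℝ, x ≠ 0 → 0 < x ⬝ᵥ A *ᵥ x := fun x hx => by
    simpa using hA.dotProduct_mulVec_pos hx
  rcases (Metric.sphere (0 : ι → ℝ) 1).eq_empty_or_nonempty with he | hne
  · have hx0 : ∀ x : ι → ℝ, x = 0 := fun x => by
      by_contra hx
      have : ‖x‖⁻¹ • x ∈ Metric.sphere (0 : ι → ℝ) 1 := by
        simp [norm_smul, hx]
      simp [he] at this
    exact ⟨1, one_pos, fun x => by simp [hx0 x]⟩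
  · obtain ⟨x₀, hx₀, hmin⟩ := (isCompact_sphere (0 : ι → ℝ) 1).exists_isMinOn hne
      hcont.continuousOn
    refine ⟨x₀ ⬝ᵥ A *ᵥ x₀, hpos _ ?_, fun x => ?_⟩
    · rintro rfl
      simp at hx₀
    · by_cases hx : x = 0
      · simp [hx]
      have hn : 0 < ‖x‖ := norm_pos_iff.2 hx
      have hmem : ‖x‖⁻¹ • x ∈ Metric.sphere (0 : ι → ℝ) 1 := by simp [norm_smul, hx]
      have := isMinOn_iff.1 hmin _ hmem
      simp only [mulVec_smul, dotProduct_smul, smul_dotProduct, smul_eq_mul] at this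
      calc _ ≤ ‖x‖⁻¹ * (‖x‖⁻¹ * (x ⬝ᵥ A *ᵥ x)) * ‖x‖ ^ 2 := by gcongr
        _ = _ := by field_simp

/-- Entries of a symmetric matrix with `0 ⪯ A ⪯ M` are bounded by `M`, by testing the form
on `e_a ± e_b`. -/
lemma abs_entry_le {n : ℕ} {A : Matrix (Fin n) (Fin n) ℝ} {M : ℝ} (hs : A.IsSymm)
    (h0 : ∀ x : Fin n → ℝ, 0 ≤ x ⬝ᵥ A *ᵥ x)
    (hM : ((M • 1 : Matrix (Fin n) (Fin n) ℝ) - A).PosSemidef) (a b : Fin n) : |A a b| ≤ M := by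
  have hd : ∀ i, A i i ≤ M := fun i => by
    have := hM.dotProduct_mulVec_nonneg (Pi.single i 1)
    simpa [sub_mulVec, smul_mulVec] using this
  have hab : A b a = A a b := hs.apply a b
  have h1 := h0 (Pi.single a 1 + Pi.single b 1)
  have h2 := h0 (Pi.single a 1 - Pi.single b 1)
  simp [mulVec_add, mulVec_sub] at h1 h2
  rw [abs_le]
  constructor <;> linarith [hd a, hd b]

/-! ### Persistency of excitation -/

/-- Persistency of excitation tested on a fixed vector. -/
lemma PEWith.le_integral {p m : ℕ} {Y : ℝ → Matrix (Fin p) (Fin m) ℝ} {T α : ℝ} (hT : 0 < T)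
    (h : PEWith Y T α) (hY : ∀ a b, ContinuousOn (fun t => Y t a b) (Set.Ici 0))
    {t : ℝ} (ht : 0 ≤ t) (x : Fin m → ℝ) :
    α * T * (x ⬝ᵥ x) ≤ ∫ τ in t..(t + T), (Y τ *ᵥ x) ⬝ᵥ (Y τ *ᵥ x) := by
  have hsub : Set.uIcc t (t + T) ⊆ Set.Ici 0 := by
    rw [Set.uIcc_of_le (by linarith)]
    exact fun y hy => ht.trans hy.1
  have hint : ∀ a b, IntervalIntegrable (fun τ => ((Y τ)ᵀ * Y τ) a b) volume t (t + T) := by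
    intro a b
    apply ContinuousOn.intervalIntegrable
    simp only [mul_apply, transpose_apply]
    exact continuousOn_finsetSum _ fun i _ => ((hY i a).mono hsub).mul ((hY i b).mono hsub)
  have key : x ⬝ᵥ gramInt Y t T *ᵥ x = ∫ τ in t..(t + T), (Y τ *ᵥ x) ⬝ᵥ (Y τ *ᵥ x) := by
    have : ∀ τ, (Y τ *ᵥ x) ⬝ᵥ (Y τ *ᵥ x) = ∑ a, ∑ b, x a * (((Y τ)ᵀ * Y τ) a b * x b) := by
      intro τ
      rw [dotProduct_mulVec, vecMul_mulVec, ← dotProduct_mulVec]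
      simp [dotProduct, mulVec, Finset.mul_sum]
    simp_rw [this]
    rw [intervalIntegral.integral_finsetSum]
    · simp only [dotProduct, mulVec, gramInt, of_apply, Finset.mul_sum]
      refine Finset.sum_congr rfl fun a _ => ?_
      rw [intervalIntegral.integral_finsetSum]
      · refine Finset.sum_congr rfl fun b _ => ?_
        rw [intervalIntegral.integral_const_mul, intervalIntegral.integral_mul_const]
      · exact fun b _ => ((hint a b).mul_const _).const_mul _
    · intro a _
      have := IntervalIntegrable.sum Finset.univ (μ := volume) (a := t) (b := t + T)
        (f := fun b τ => x a * (((Y τ)ᵀ * Y τ) a b * x b))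
        fun b _ => ((hint a b).mul_const _).const_mul _
      simpa [Finset.sum_fn] using this
  have := (h t ht).dotProduct_mulVec_nonneg x
  simp [sub_mulVec, smul_mulVec, key] at this
  calc _ = T * (α * (x ⬝ᵥ x)) := by ring
    _ ≤ T * (T⁻¹ * _) := by gcongr
    _ = _ := by field_simp

/-! ### Convergence of the closed loop -/

/-- Theorem 1 of the paper: single-robot direct adaptive control.
For the closed-loop error dynamics `H ṡ + (C + K_D) s = Y ã` with gradient parameter
update `ã̇ = −P Yᵀ s`, if the regressor `Y` is persistently exciting then both the
tracking error `s` and the parameter error `ã` converge to zero. -/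
theorem single_robot_direct_adaptive_convergence (nj m : ℕ)
    (H C : ℝ → Matrix (Fin nj) (Fin nj) ℝ)
    (KD : Matrix (Fin nj) (Fin nj) ℝ) (P : Matrix (Fin m) (Fin m) ℝ)
    (Y dY : ℝ → Matrix (Fin nj) (Fin m) ℝ)
    (μ M : ℝ) (hμ : 0 < μ) (hμM : μ ≤ M)
    (s ds : ℝ → Fin nj → ℝ) (at' : ℝ → Fin m → ℝ)
    -- `H t` symmetric with `μ I ⪯ H t ⪯ M I`, continuously differentiable, `H' = C + Cᵀ`
    (hHsymm : ∀ t, 0 ≤ t → (H t).IsSymm)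
    (hHlb : ∀ t, 0 ≤ t → (H t - μ • 1).PosSemidef)
    (hHub : ∀ t, 0 ≤ t → ((M • 1 : Matrix (Fin nj) (Fin nj) ℝ) - H t).PosSemidef)
    (hHd : ∀ t, 0 ≤ t → ∀ a b,
      HasDerivWithinAt (fun τ => H τ a b) ((C t + (C t)ᵀ) a b) (Set.Ici 0) t)
    -- `C` continuous and bounded
    (hCc : ∀ a b, ContinuousOn (fun t => C t a b) (Set.Ici 0))
    (hCbd : ∃ c, ∀ t, 0 ≤ t → ∀ a b, |C t a b| ≤ c)
    -- the gains are symmetric positive definite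
    (hKD : KD.PosDef) (hP : P.PosDef)
    -- `Y` continuously differentiable with `Y` and `Y'` bounded
    (hYd : ∀ t, 0 ≤ t → ∀ a b,
      HasDerivWithinAt (fun τ => Y τ a b) (dY t a b) (Set.Ici 0) t)
    (hdYc : ∀ a b, ContinuousOn (fun t => dY t a b) (Set.Ici 0))
    (hYbd : ∃ c, ∀ t, 0 ≤ t → ∀ a b, |Y t a b| ≤ c ∧ |dY t a b| ≤ c)
    -- closed-loop dynamics and gradient update law
    (hs : ∀ t, 0 ≤ t → HasDerivWithinAt s (ds t) (Set.Ici 0) t)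
    (hdyn : ∀ t, 0 ≤ t → H t *ᵥ ds t + (C t + KD) *ᵥ s t = Y t *ᵥ at' t)
    (hat : ∀ t, 0 ≤ t →
      HasDerivWithinAt at' (-(P *ᵥ ((Y t)ᵀ *ᵥ s t))) (Set.Ici 0) t)
    -- persistency of excitation
    (hPE : ∃ T > (0:ℝ), ∃ α > (0:ℝ), PEWith Y T α) :
    Tendsto s atTop (𝓝 0) ∧ Tendsto at' atTop (𝓝 0) := by
  classical
  set F : Filter ℝ := 𝓟 (Set.Ici (0 : ℝ)) with hF
  have bdd : ∀ {f : ℝ → ℝ}, (∃ c, ∀ t, 0 ≤ t → |f t| ≤ c) → f =O[F] fun _ => (1 : ℝ) := by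
    rintro f ⟨c, hc⟩
    exact Asymptotics.isBigO_principal.2 ⟨c, fun t ht => by simpa using hc t ht⟩
  -- bounded coefficients
  have bC : ∀ a b, (fun t => C t a b) =O[F] fun _ => (1 : ℝ) := fun a b =>
    bdd (hCbd.imp fun c hc t ht => hc t ht a b)
  have bCT : ∀ a b, (fun t => (C t)ᵀ a b) =O[F] fun _ => (1 : ℝ) := fun a b => bC b a
  have bY : ∀ a b, (fun t => Y t a b) =O[F] fun _ => (1 : ℝ) := fun a b =>
    bdd (hYbd.imp fun c hc t ht => (hc t ht a b).1)
  have bYT : ∀ a b, (fun t => (Y t)ᵀ a b) =O[F] fun _ => (1 : ℝ) := fun a b => bY b a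
  have bdY : ∀ a b, (fun t => dY t a b) =O[F] fun _ => (1 : ℝ) := fun a b =>
    bdd (hYbd.imp fun c hc t ht => (hc t ht a b).2)
  have bKD : ∀ a b, (fun _ : ℝ => KD a b) =O[F] fun _ => (1 : ℝ) := fun a b =>
    bdd ⟨|KD a b|, fun _ _ => le_rfl⟩
  have bP : ∀ a b, (fun _ : ℝ => P a b) =O[F] fun _ => (1 : ℝ) := fun a b =>
    bdd ⟨|P a b|, fun _ _ => le_rfl⟩
  have Hlb : ∀ t, 0 ≤ t → ∀ x : Fin nj → ℝ, μ * (x ⬝ᵥ x) ≤ x ⬝ᵥ H t *ᵥ x := fun t ht x => by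
    have := (hHlb t ht).dotProduct_mulVec_nonneg x
    simpa [sub_mulVec, smul_mulVec] using this
  have Hlb' : ∀ t, 0 ≤ t → ∀ x : Fin nj → ℝ, μ * ‖x‖ ^ 2 ≤ x ⬝ᵥ H t *ᵥ x := fun t ht x =>
    (mul_le_mul_of_nonneg_left (norm_sq_le_dotProduct x) hμ.le).trans (Hlb t ht x)
  have bH : ∀ a b, (fun t => H t a b) =O[F] fun _ => (1 : ℝ) := fun a b =>
    bdd ⟨M, fun t ht => abs_entry_le (hHsymm t ht)
      (fun x => (by positivity : 0 ≤ μ * ‖x‖ ^ 2).trans (Hlb' t ht x)) (hHub t ht) a b⟩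
  have symm_dot : ∀ {n : ℕ} {A : Matrix (Fin n) (Fin n) ℝ}, A.IsSymm → ∀ x y : Fin n → ℝ,
      x ⬝ᵥ A *ᵥ y = y ⬝ᵥ A *ᵥ x := by
    intro n A hA x y
    rw [dotProduct_mulVec, ← mulVec_transpose, hA.eq, dotProduct_comm]
  have hPisymm : (P⁻¹).IsSymm := by
    have := hP.inv.isHermitian
    rwa [isHermitian_iff_isSymm] at this
  have hKDsymm : KD.IsSymm := by
    have := hKD.isHermitian
    rwa [isHermitian_iff_isSymm] at this
  obtain ⟨k, hk, hkc⟩ := exists_coercive hKD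
  obtain ⟨p, hp, hpc⟩ := exists_coercive hP.inv
  -- the Lyapunov function
  set V : ℝ → ℝ := fun t => s t ⬝ᵥ H t *ᵥ s t + at' t ⬝ᵥ P⁻¹ *ᵥ at' t with hVdef
  set q : ℝ → ℝ := fun t => 2 * (s t ⬝ᵥ KD *ᵥ s t) with hqdef
  have hPd : ∀ x : Fin m → ℝ, P⁻¹ *ᵥ (P *ᵥ x) = x := fun x => by
    rw [mulVec_mulVec, nonsing_inv_mul _ ((isUnit_iff_isUnit_det _).1 hP.isUnit), one_mulVec]
  have hV : ∀ t, 0 ≤ t → HasDerivWithinAt V (-q t) (Set.Ici 0) t := by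
    intro t ht
    have h1 := (hs t ht).dotProduct_aux
      (HasDerivWithinAt.mulVec_aux (hHd t ht) (hs t ht))
    have h2 := (hat t ht).dotProduct_aux
      (HasDerivWithinAt.mulVec_aux (A := fun _ => P⁻¹) (A' := 0)
        (fun a b => hasDerivWithinAt_const _ _ _) (hat t ht))
    refine (h1.add h2).congr_deriv ?_
    have hd : H t *ᵥ ds t = Y t *ᵥ at' t - (C t + KD) *ᵥ s t := eq_sub_of_add_eq (hdyn t ht)
    have e1 : ds t ⬝ᵥ H t *ᵥ s t = s t ⬝ᵥ H t *ᵥ ds t := symm_dot (hHsymm t ht) _ _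
    have e2 : (P *ᵥ (Y t)ᵀ *ᵥ s t) ⬝ᵥ P⁻¹ *ᵥ at' t = s t ⬝ᵥ Y t *ᵥ at' t := by
      rw [symm_dot hPisymm, hPd, dotProduct_comm, mulVec_transpose, ← dotProduct_mulVec]
    have e3 : at' t ⬝ᵥ (Y t)ᵀ *ᵥ s t = s t ⬝ᵥ Y t *ᵥ at' t := by
      rw [dotProduct_comm, mulVec_transpose, ← dotProduct_mulVec]
    have e4 : s t ⬝ᵥ (C t)ᵀ *ᵥ s t = s t ⬝ᵥ C t *ᵥ s t := by
      rw [dotProduct_comm, mulVec_transpose, ← dotProduct_mulVec]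
    simp only [hqdef, add_mulVec, dotProduct_add, mulVec_neg, dotProduct_neg, neg_dotProduct,
      hPd, e1, e2, e3, e4, hd, dotProduct_sub, zero_mulVec, zero_add]
    ring
  have hq0 : ∀ t, 0 ≤ q t := fun t =>
    mul_nonneg zero_le_two ((by positivity : 0 ≤ k * ‖s t‖ ^ 2).trans (hkc (s t)))
  have hVs : ∀ t, 0 ≤ t → μ * ‖s t‖ ^ 2 + p * ‖at' t‖ ^ 2 ≤ V t := fun t ht =>
    add_le_add (Hlb' t ht _) (hpc _)
  have hV0 : ∀ t, 0 ≤ t → 0 ≤ V t := fun t ht => le_trans (by positivity) (hVs t ht)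
  have hVle : ∀ t, 0 ≤ t → V t ≤ V 0 := fun t ht => by
    have := sub_le_of_deriv_le le_rfl ht hV (K := 0) fun τ _ => by linarith [hq0 τ]
    linarith
  have bs : s =O[F] fun _ => (1 : ℝ) := by
    refine Asymptotics.isBigO_principal.2 ⟨√(V 0 / μ), fun t ht => ?_⟩
    rw [norm_one, mul_one]
    refine Real.le_sqrt_of_sq_le ((le_div_iff₀ hμ).2 ?_)
    nlinarith [hVs t ht, hVle t ht, mul_nonneg hp.le (sq_nonneg ‖at' t‖)]
  have ba : at' =O[F] fun _ => (1 : ℝ) := by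
    refine Asymptotics.isBigO_principal.2 ⟨√(V 0 / p), fun t ht => ?_⟩
    rw [norm_one, mul_one]
    refine Real.le_sqrt_of_sq_le ((le_div_iff₀ hp).2 ?_)
    nlinarith [hVs t ht, hVle t ht, mul_nonneg hμ.le (sq_nonneg ‖s t‖)]
  have bz : (fun t => Y t *ᵥ at' t) =O[F] fun _ => (1 : ℝ) := isBigO_mulVec bY ba
  -- `μ |ṡ|² ≤ ṡᵀ H ṡ` and the dynamics bound `ṡ`
  have bds : ds =O[F] fun _ => (1 : ℝ) := by
    have br : (fun t => H t *ᵥ ds t) =O[F] fun _ => (1 : ℝ) := by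
      have : (fun t => Y t *ᵥ at' t - (C t *ᵥ s t + KD *ᵥ s t)) =O[F] fun _ => (1 : ℝ) :=
        bz.sub ((isBigO_mulVec bC bs).add (isBigO_mulVec bKD bs))
      refine this.congr' ?_ Filter.EventuallyEq.rfl
      refine Filter.eventually_principal.2 fun t ht => ?_
      beta_reduce
      rw [← add_mulVec, ← hdyn t ht, add_sub_cancel_right]
    refine Asymptotics.IsBigO.trans ?_ br
    refine Asymptotics.isBigO_principal.2 ⟨nj / μ, fun t ht => ?_⟩
    have h1 := Hlb' t ht (ds t)
    have h2 := (le_abs_self _).trans (abs_dotProduct_le (ds t) (H t *ᵥ ds t))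
    rw [Fintype.card_fin] at h2
    rw [div_mul_eq_mul_div, le_div_iff₀ hμ]
    rcases (norm_nonneg (ds t)).eq_or_lt with h0 | h0
    · rw [← h0]; simp; positivity
    · refine le_of_mul_le_mul_left ?_ h0
      nlinarith
  have hq : ∀ t, 0 ≤ t → HasDerivWithinAt q (4 * (ds t ⬝ᵥ KD *ᵥ s t)) (Set.Ici 0) t := by
    intro t ht
    have h2 := ((hs t ht).dotProduct_aux
      (HasDerivWithinAt.mulVec_aux (A := fun _ => KD) (A' := 0)
        (fun a b => hasDerivWithinAt_const _ _ _) (hs t ht))).const_mul 2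
    refine h2.congr_deriv ?_
    rw [zero_mulVec, zero_add, symm_dot hKDsymm (s t)]
    ring
  obtain ⟨L, hL⟩ := Asymptotics.isBigO_principal.1
    (isBigO_dotProduct bds (isBigO_mulVec bKD bs))
  have hqlim : Tendsto q atTop (𝓝 0) :=
    tendsto_zero_of_dissipation (L := 4 * |L|) (by positivity) hV (fun t _ => le_rfl) hV0
      (fun t _ => hq0 t) hq fun t ht => by
        have h1 := hL t ht
        simp only [mul_one, norm_one, Real.norm_eq_abs] at h1
        linarith [neg_abs_le (ds t ⬝ᵥ KD *ᵥ s t), le_abs_self L]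
  have hslim : Tendsto s atTop (𝓝 0) := by
    rw [tendsto_zero_iff_norm_tendsto_zero]
    have h1 : Tendsto (fun t => √(q t / (2 * k))) atTop (𝓝 0) := by
      simpa using (hqlim.div_const (2 * k)).sqrt
    refine squeeze_zero (fun _ => norm_nonneg _) (fun t => ?_) h1
    refine Real.le_sqrt_of_sq_le ((le_div_iff₀ (by positivity)).2 ?_)
    have := hkc (s t)
    simp only [hqdef]
    linarith
  refine ⟨hslim, ?_⟩
  have bss : s =O[F] fun t => ‖s t‖ := (Asymptotics.isBigO_refl s F).norm_right
  have bda : (fun t => -(P *ᵥ ((Y t)ᵀ *ᵥ s t))) =O[F] fun t => ‖s t‖ :=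
    (isBigO_mulVec bP (isBigO_mulVec bYT bss)).neg_left
  -- the cross term `(Y ã)ᵀ H s`, with derivative `|Y ã|² + O(|s|)`
  set w : ℝ → ℝ := fun t => (Y t *ᵥ at' t) ⬝ᵥ (H t *ᵥ s t) with hwdef
  set R : ℝ → ℝ := fun t =>
    (dY t *ᵥ at' t + Y t *ᵥ (-(P *ᵥ ((Y t)ᵀ *ᵥ s t)))) ⬝ᵥ (H t *ᵥ s t)
      + (Y t *ᵥ at' t) ⬝ᵥ ((C t)ᵀ *ᵥ s t - KD *ᵥ s t) with hRdef
  have hw : ∀ t, 0 ≤ t → HasDerivWithinAt w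
      ((Y t *ᵥ at' t) ⬝ᵥ (Y t *ᵥ at' t) + R t) (Set.Ici 0) t := by
    intro t ht
    refine ((HasDerivWithinAt.mulVec_aux (hYd t ht) (hat t ht)).dotProduct_aux
      (HasDerivWithinAt.mulVec_aux (hHd t ht) (hs t ht))).congr_deriv ?_
    have hd : H t *ᵥ ds t = Y t *ᵥ at' t - (C t + KD) *ᵥ s t := eq_sub_of_add_eq (hdyn t ht)
    simp only [hRdef, hd, add_mulVec, dotProduct_add, dotProduct_sub]
    ring
  have bHs : (fun t => H t *ᵥ s t) =O[F] fun t => ‖s t‖ := isBigO_mulVec bH bss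
  have bw : w =O[F] fun t => ‖s t‖ := by simpa only [one_mul] using isBigO_dotProduct bz bHs
  have bR : R =O[F] fun t => ‖s t‖ := by
    have h1 : (fun t => dY t *ᵥ at' t + Y t *ᵥ (-(P *ᵥ ((Y t)ᵀ *ᵥ s t)))) =O[F]
        fun _ => (1 : ℝ) :=
      (isBigO_mulVec bdY ba).add (isBigO_mulVec bY
        (isBigO_mulVec bP (isBigO_mulVec bYT bs)).neg_left)
    have h2 := isBigO_dotProduct h1 bHs
    have h3 := isBigO_dotProduct bz ((isBigO_mulVec bCT bss).sub (isBigO_mulVec bKD bss))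
    simp only [one_mul] at h2 h3
    exact h2.add h3
  have getpos : ∀ {E : Type} [NormedAddCommGroup E] {f : ℝ → E}, f =O[F] (fun t => ‖s t‖) →
      ∃ c, 0 ≤ c ∧ ∀ t, 0 ≤ t → ‖f t‖ ≤ c * ‖s t‖ := by
    intro E _ f hf
    obtain ⟨c, hc, h⟩ := hf.exists_nonneg
    exact ⟨c, hc, fun t ht => by
      simpa using Filter.eventually_principal.1 h.bound t ht⟩
  obtain ⟨K₁, hK₁, hw1⟩ := getpos bw
  obtain ⟨K₂, hK₂, hR1⟩ := getpos bR
  obtain ⟨K₃, hK₃, ha1⟩ := getpos bda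
  obtain ⟨c, hc⟩ := hYbd
  -- a uniform bound for the quadratic form `|Y x|²`
  obtain ⟨K₄, hK₄, hYx⟩ : ∃ K₄, 0 ≤ K₄ ∧ ∀ t, 0 ≤ t → ∀ x : Fin m → ℝ,
      (Y t *ᵥ x) ⬝ᵥ (Y t *ᵥ x) ≤ K₄ * ‖x‖ ^ 2 := by
    refine ⟨nj * (m * |c|) ^ 2, by positivity, fun t ht x => ?_⟩
    have h1 : ‖Y t *ᵥ x‖ ≤ m * |c| * ‖x‖ := by
      rw [pi_norm_le_iff_of_nonneg (by positivity)]
      intro i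
      have h2 := abs_dotProduct_le (Y t i) x
      rw [Fintype.card_fin] at h2
      have h3 : ‖Y t i‖ ≤ |c| := (pi_norm_le_iff_of_nonneg (abs_nonneg c)).2 fun j =>
        ((hc t ht i j).1).trans (le_abs_self c)
      calc ‖(Y t *ᵥ x) i‖ ≤ m * (‖Y t i‖ * ‖x‖) := h2
        _ ≤ m * (|c| * ‖x‖) := by gcongr
        _ = _ := by ring
    have h2 := (le_abs_self _).trans (abs_dotProduct_le (Y t *ᵥ x) (Y t *ᵥ x))
    rw [Fintype.card_fin] at h2
    calc _ ≤ (nj : ℝ) * (‖Y t *ᵥ x‖ * ‖Y t *ᵥ x‖) := h2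
      _ ≤ (nj : ℝ) * ((m * |c| * ‖x‖) * (m * |c| * ‖x‖)) := by gcongr
      _ = _ := by ring
  obtain ⟨T, hT, α, hα, hPE⟩ := hPE
  have hYcont : ∀ a b, ContinuousOn (fun t => Y t a b) (Set.Ici 0) := fun a b t ht =>
    (hYd t ht a b).continuousWithinAt
  -- smallness of `s` on a window controls `ã` at its left end
  have main : ∀ t, 0 ≤ t → ∀ ε, 0 ≤ ε → ε ≤ 1 → (∀ τ, t ≤ τ → ‖s τ‖ ≤ ε) →
      ‖at' t‖ ^ 2 ≤ (4 * K₁ + 2 * (K₂ + K₄ * (K₃ * T) ^ 2) * T) / (α * T) * ε := by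
    intro t ht ε hε hε1 hsε
    have htT : t ≤ t + T := by linarith
    have hdiff : ∀ τ ∈ Set.Icc t (t + T), ‖at' t - at' τ‖ ≤ K₃ * ε * T := by
      intro τ hτ
      have := Convex.norm_image_sub_le_of_norm_hasDerivWithin_le (s := Set.Icc t (t + T))
        (f := at') (C := K₃ * ε) (x := τ) (y := t)
        (fun y hy => (hat y (ht.trans hy.1)).mono fun z hz => ht.trans hz.1)
        (fun y hy => (ha1 y (ht.trans hy.1)).trans
          (mul_le_mul_of_nonneg_left (hsε y hy.1) hK₃))
        (convex_Icc _ _) hτ (Set.left_mem_Icc.2 htT)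
      refine this.trans (mul_le_mul_of_nonneg_left ?_ (by positivity))
      rw [Real.norm_eq_abs, abs_le]
      constructor <;> linarith [hτ.1, hτ.2]
    set D : ℝ := 2 * (K₂ + K₄ * (K₃ * T) ^ 2) * ε with hD
    have hg : ∀ τ, 0 ≤ τ → HasDerivWithinAt (fun y => 2 * w y + D * y)
        (2 * ((Y τ *ᵥ at' τ) ⬝ᵥ (Y τ *ᵥ at' τ) + R τ) + D) (Set.Ici 0) τ := fun τ hτ => by
      simpa using ((hw τ hτ).const_mul 2).fun_add
        ((hasDerivWithinAt_id τ (Set.Ici 0)).const_mul D)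
    have hint := intervalIntegral.integral_le_sub_of_hasDeriv_right_of_le
      (φ := fun τ => (Y τ *ᵥ at' t) ⬝ᵥ (Y τ *ᵥ at' t)) htT
      (fun τ hτ => (hg τ (ht.trans hτ.1)).continuousWithinAt.mono fun z hz => ht.trans hz.1)
      (fun τ hτ => (hg τ (ht.trans hτ.1.le)).mono
        fun z hz => (ht.trans hτ.1.le).trans (le_of_lt hz))
      (by
        apply ContinuousOn.integrableOn_Icc
        simp only [dotProduct, mulVec]
        have : ∀ i, ContinuousOn (fun τ => ∑ j, Y τ i j * at' t j) (Set.Icc t (t + T)) :=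
          fun i => continuousOn_finsetSum _ fun j _ =>
            ((hYcont i j).mono fun z hz => ht.trans hz.1).mul continuousOn_const
        exact continuousOn_finsetSum _ fun i _ => (this i).mul (this i))
      (by
        intro τ hτ
        have hτ0 : 0 ≤ τ := ht.trans hτ.1.le
        have h1 := hYx τ hτ0 (at' t - at' τ)
        have h2 : K₄ * ‖at' t - at' τ‖ ^ 2 ≤ K₄ * (K₃ * ε * T) ^ 2 := by
          have := hdiff τ ⟨hτ.1.le, hτ.2.le⟩
          gcongr
        have h3 : K₄ * (K₃ * ε * T) ^ 2 ≤ K₄ * (K₃ * T) ^ 2 * ε := by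
          have : 0 ≤ K₄ * (K₃ * T) ^ 2 * (ε * (1 - ε)) :=
            mul_nonneg (by positivity) (mul_nonneg hε (by linarith))
          nlinarith
        have h4 : -(K₂ * ε) ≤ R τ := by
          have h5 := hR1 τ hτ0
          rw [Real.norm_eq_abs] at h5
          linarith [neg_abs_le (R τ), mul_le_mul_of_nonneg_left (hsε τ hτ.1.le) hK₂]
        -- `|u|² ≤ 2|v|² + 2|u - v|²`
        have h6 : ∀ u v : Fin nj → ℝ, u ⬝ᵥ u ≤ 2 * (v ⬝ᵥ v) + 2 * ((u - v) ⬝ᵥ (u - v)) := by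
          intro u v
          simp only [dotProduct, Finset.mul_sum, ← Finset.sum_add_distrib]
          refine Finset.sum_le_sum fun i _ => ?_
          simp only [Pi.sub_apply]
          nlinarith [sq_nonneg (u i - 2 * v i)]
        have h7 := h6 (Y τ *ᵥ at' t) (Y τ *ᵥ at' τ)
        rw [← mulVec_sub] at h7
        linarith)
    have hpe := hPE.le_integral hT hYcont ht (at' t)
    have hn : α * T * ‖at' t‖ ^ 2 ≤ α * T * (at' t ⬝ᵥ at' t) :=
      mul_le_mul_of_nonneg_left (norm_sq_le_dotProduct _) (by positivity)
    have hwb : ∀ τ, t ≤ τ → |w τ| ≤ K₁ * ε := fun τ hτ =>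
      (hw1 τ (ht.trans hτ)).trans (mul_le_mul_of_nonneg_left (hsε τ hτ) hK₁)
    have hwa := neg_abs_le (w t)
    have hwc := le_abs_self (w (t + T))
    have hwd := hwb t le_rfl
    have hwe := hwb (t + T) htT
    rw [div_mul_eq_mul_div, le_div_iff₀ (by positivity)]
    linarith
  set K := (4 * K₁ + 2 * (K₂ + K₄ * (K₃ * T) ^ 2) * T) / (α * T) with hK
  have hK0 : 0 ≤ K := by positivity
  rw [Metric.tendsto_atTop]
  intro δ hδ
  set ε := min 1 (δ ^ 2 / (K + 1)) with hεdef
  have hε : 0 < ε := by positivity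
  obtain ⟨t₀, ht₀⟩ := Metric.tendsto_atTop.1 hslim ε hε
  refine ⟨max t₀ 0, fun t ht => ?_⟩
  have h1 := main t ((le_max_right _ _).trans ht) ε hε.le (min_le_left _ _) fun τ hτ => by
    simpa using (ht₀ τ ((le_max_left _ _).trans (ht.trans hτ))).le
  have h2 : (K + 1) * ε ≤ δ ^ 2 := by
    have := min_le_right 1 (δ ^ 2 / (K + 1))
    rwa [← hεdef, le_div_iff₀ (by positivity), mul_comm] at this
  rw [dist_zero_right]
  exact lt_of_pow_lt_pow_left₀ 2 hδ.le (by linarith)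
end

section
/- Fix n ≥ 1 and dimensions n_j, m. For i = 1, …, n let H_i : [0,∞) → ℝ^{n_j×n_j} be continuously differentiable with H_i(t) symmetric and μI ⪯ H_i(t) ⪯ MI for constants 0 < μ ≤ M; let C_i : [0,∞) → ℝ^{n_j×n_j} be continuous and bounded with H_i'(t) = C_i(t) + C_i(t)ᵀ; let K_{D_i} ∈ ℝ^{n_j×n_j} be symmetric positive definite; and let Y_i : [0,∞) → ℝ^{n_j×m} be continuously differentiable with Y_i and Y_i' bounded. Let P ∈ ℝ^{m×m} be symmetric positive definite. Suppose differentiable functions s_i : [0,∞) → ℝ^{n_j} and a shared parameter error ã : [0,∞) → ℝ^m satisfy H_i(t)ṡ_i(t) + (C_i(t) + K_{D_i})s_i(t) = Y_i(t)ã(t) for each i and the centralized update ã̇(t) = −P ∑_{i=1}^n Y_i(t)ᵀs_i(t). If the family {Y_1, …, Y_n} is collectively persistently exciting, then each s_i(t) → 0 and ã(t) → 0 as t → ∞. -/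
/-!
The energy `V = ∑ sᵢᵀ Hᵢ sᵢ + ãᵀ P⁻¹ ã` satisfies `V' = -2 ∑ sᵢᵀ K_{Dᵢ} sᵢ`: the relation
`Hᵢ' = Cᵢ + Cᵢᵀ` cancels the Coriolis terms, and the shared update law cancels the coupling with
`ã`. Hence every `sᵢ` and `ã` is bounded, `ṡᵢ` is bounded through the dynamics, and a Barbalat
argument (`barbalat`) gives `sᵢ → 0`; then also `ã' → 0`.

For `ã`, consider the cross term `w = ∑ (Hᵢ sᵢ) · (Yᵢ ã)`. It tends to `0`, and its derivative is
`∑ |Yᵢ ã|² + o(1)`, because `(Hᵢ sᵢ)' = Yᵢ ã + (Cᵢᵀ - K_{Dᵢ}) sᵢ`. As `ã' → 0`, on a window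
`[t, t + T]` the value `ã(τ)` may be replaced by `ã(t)` at a cost that vanishes uniformly as
`t → ∞`. Integrating over the window (`integral_le_increment`, `gramInt_quadratic`) and using
persistency of excitation,
`α |ã(t)|² ≤ T⁻¹ (w(t + T) - w(t)) + o(1)`, so `ã → 0`.
-/

open Matrix MeasureTheory Filter Topology

/-- The family `{W i}` is collectively persistently exciting with window `T` and level `α`:
`(1/T) ∑ i ∫_t^{t+T} W_i(τ)ᵀ W_i(τ) dτ ⪰ α I` for all `t ≥ 0`. -/
def CollPEWith {ι : Type} [Fintype ι] {P : ι → Type} [∀ i, Fintype (P i)] {m : ℕ}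
    (W : (i : ι) → ℝ → Matrix (P i) (Fin m) ℝ) (T α : ℝ) : Prop :=
  ∀ t, 0 ≤ t →
    (T⁻¹ • (∑ i, gramInt (W i) t T) - α • (1 : Matrix (Fin m) (Fin m) ℝ)).PosSemidef

open Asymptotics

/-! ### Calculus and asymptotics of matrix-vector products

Boundedness and convergence to zero along a filter are expressed entrywise as `=O[l] 1` and
`=o[l] 1`, so that both are preserved by sums and products. -/

section helpers
variable {X : Type} {l : Filter X} {p m : ℕ}

/-- Product rule for `A v`, with the derivative of `A` given entrywise. -/
theorem hasDerivWithinAt_mulVec {A : ℝ → Matrix (Fin p) (Fin m) ℝ} {A' : Matrix (Fin p) (Fin m) ℝ}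
    {v : ℝ → Fin m → ℝ} {v' : Fin m → ℝ} {S : Set ℝ} {t : ℝ}
    (hA : ∀ a b, HasDerivWithinAt (fun τ => A τ a b) (A' a b) S t)
    (hv : HasDerivWithinAt v v' S t) :
    HasDerivWithinAt (fun τ => A τ *ᵥ v τ) (A' *ᵥ v t + A t *ᵥ v') S t := by
  rw [hasDerivWithinAt_pi] at hv ⊢
  intro a
  simp only [mulVec, dotProduct, Pi.add_apply, ← Finset.sum_add_distrib]
  exact HasDerivWithinAt.fun_sum fun b _ => (hA a b).mul (hv b)

theorem hasDerivWithinAt_dotProduct {u v : ℝ → Fin m → ℝ} {u' v' : Fin m → ℝ} {S : Set ℝ} {t : ℝ}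
    (hu : HasDerivWithinAt u u' S t) (hv : HasDerivWithinAt v v' S t) :
    HasDerivWithinAt (fun τ => u τ ⬝ᵥ v τ) (u' ⬝ᵥ v t + u t ⬝ᵥ v') S t := by
  rw [hasDerivWithinAt_pi] at hu hv
  simp only [dotProduct, ← Finset.sum_add_distrib]
  exact HasDerivWithinAt.fun_sum fun b _ => (hu b).mul (hv b)

theorem dot_bdd {u v : X → Fin m → ℝ} (hu : ∀ a, (fun x => u x a) =O[l] fun _ => (1 : ℝ))
    (hv : ∀ a, (fun x => v x a) =O[l] fun _ => (1 : ℝ)) :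
    (fun x => u x ⬝ᵥ v x) =O[l] fun _ => (1 : ℝ) := by
  have := IsBigO.sum (s := Finset.univ) fun b _ => (hu b).mul (hv b)
  simpa only [one_mul, dotProduct, Finset.sum_fn] using this

theorem dot_small {u v : X → Fin m → ℝ} (hu : ∀ a, (fun x => u x a) =o[l] fun _ => (1 : ℝ))
    (hv : ∀ a, (fun x => v x a) =O[l] fun _ => (1 : ℝ)) :
    (fun x => u x ⬝ᵥ v x) =o[l] fun _ => (1 : ℝ) := by
  have := IsLittleO.sum (s := Finset.univ) fun b _ => (hu b).mul_isBigO (hv b)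
  simpa only [one_mul, dotProduct, Finset.sum_fn] using this

theorem sum_small {ι : Type} [Fintype ι] {f : ι → X → ℝ} (h : ∀ i, f i =o[l] fun _ => (1 : ℝ)) :
    (fun x => ∑ i, f i x) =o[l] fun _ => (1 : ℝ) := by
  simpa only [Finset.sum_fn] using IsLittleO.sum (s := Finset.univ) fun i _ => h i

theorem mulVec_bdd {A : X → Matrix (Fin p) (Fin m) ℝ} {v : X → Fin m → ℝ}
    (hA : ∀ a b, (fun x => A x a b) =O[l] fun _ => (1 : ℝ))
    (hv : ∀ a, (fun x => v x a) =O[l] fun _ => (1 : ℝ)) (a : Fin p) :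
    (fun x => (A x *ᵥ v x) a) =O[l] fun _ => (1 : ℝ) :=
  dot_bdd (hA a) hv

theorem mulVec_small {A : X → Matrix (Fin p) (Fin m) ℝ} {v : X → Fin m → ℝ}
    (hA : ∀ a b, (fun x => A x a b) =O[l] fun _ => (1 : ℝ))
    (hv : ∀ a, (fun x => v x a) =o[l] fun _ => (1 : ℝ)) (a : Fin p) :
    (fun x => (A x *ᵥ v x) a) =o[l] fun _ => (1 : ℝ) := by
  simp only [mulVec, dotProduct_comm (A _ a)]
  exact dot_small hv (hA a)
end helpers

/-! ### Increments and dissipation -/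

/-- A lower bound on the derivative integrates to a lower bound on the increment. No integrability
of `g'` is needed. -/
theorem integral_le_increment {g g' φ : ℝ → ℝ} {a b : ℝ}
    (hg : ∀ t, 0 ≤ t → HasDerivWithinAt g (g' t) (Set.Ici 0) t) (ha : 0 ≤ a) (hab : a ≤ b)
    (hφ : ContinuousOn φ (Set.Icc a b)) (h : ∀ t ∈ Set.Icc a b, φ t ≤ g' t) :
    ∫ t in a..b, φ t ≤ g b - g a := by
  apply intervalIntegral.integral_le_sub_of_hasDeriv_right_of_le hab
    (g' := g')
  · exact fun t ht => ((hg t (ha.trans ht.1)).continuousWithinAt).mono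
      fun x hx => ha.trans hx.1
  · exact fun t ht => (hg t (ha.trans ht.1.le)).mono
      fun x hx => (ha.trans ht.1.le).trans (le_of_lt hx)
  · exact hφ.integrableOn_Icc
  · exact fun t ht => h t ⟨ht.1.le, ht.2.le⟩

theorem mul_le_increment {g g' : ℝ → ℝ} {a b c : ℝ}
    (hg : ∀ t, 0 ≤ t → HasDerivWithinAt g (g' t) (Set.Ici 0) t) (ha : 0 ≤ a) (hab : a ≤ b)
    (h : ∀ t ∈ Set.Icc a b, c ≤ g' t) : c * (b - a) ≤ g b - g a := by
  have := integral_le_increment hg ha hab (φ := fun _ => c) continuousOn_const h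
  simpa [mul_comm] using this

theorem abs_increment_le {g g' : ℝ → ℝ} {a b c : ℝ}
    (hg : ∀ t, 0 ≤ t → HasDerivWithinAt g (g' t) (Set.Ici 0) t) (ha : 0 ≤ a) (hab : a ≤ b)
    (h : ∀ t ∈ Set.Icc a b, |g' t| ≤ c) : |g b - g a| ≤ c * (b - a) := by
  have h1 := mul_le_increment hg ha hab (c := -c) fun t ht => (abs_le.1 (h t ht)).1
  have h2 := mul_le_increment (fun t ht => (hg t ht).neg) ha hab (c := -c)
    fun t ht => by linarith [(abs_le.1 (h t ht)).2]
  simp only [Pi.neg_apply] at h2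
  rw [abs_le]; constructor <;> linarith

/-- Barbalat-type lemma: a nonnegative energy `V` dissipated at rate at least `c q`, where `q ≥ 0` has
eventually bounded derivative, forces `q → 0`. If `q t` were large at a late time it would stay
large on a window of fixed length, so `V` would drop by a fixed amount there, contradicting the
convergence of `V`. -/
theorem barbalat {V V' q q' : ℝ → ℝ} {c : ℝ} (hc : 0 < c)
    (hV : ∀ t, 0 ≤ t → HasDerivWithinAt V (V' t) (Set.Ici 0) t)
    (hq : ∀ t, 0 ≤ t → HasDerivWithinAt q (q' t) (Set.Ici 0) t)
    (hV0 : ∀ t, 0 ≤ t → 0 ≤ V t) (hq0 : ∀ t, 0 ≤ t → 0 ≤ q t)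
    (hVq : ∀ t, 0 ≤ t → V' t ≤ -(c * q t))
    (hq' : q' =O[atTop] fun _ => (1 : ℝ)) : Tendsto q atTop (𝓝 0) := by
  have hdec : ∀ a b, 0 ≤ a → a ≤ b → V b ≤ V a := fun a b ha hab => by
    have := mul_le_increment (fun t ht => (hV t ht).neg) ha hab (c := 0) fun t ht => by
      have := hVq t (ha.trans ht.1)
      have := mul_nonneg hc.le (hq0 t (ha.trans ht.1))
      linarith
    simp only [Pi.neg_apply] at this
    linarith
  obtain ⟨v, hv⟩ : ∃ v, Tendsto V atTop (𝓝 v) := by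
    have h1 : Antitone fun t => V (max t 0) := fun a b hab =>
      hdec _ _ (le_max_right _ _) (max_le_max_right _ hab)
    have h2 : BddBelow (Set.range fun t => V (max t 0)) :=
      ⟨0, by rintro _ ⟨t, rfl⟩; exact hV0 _ (le_max_right _ _)⟩
    refine ⟨_, (tendsto_atTop_ciInf h1 h2).congr' ?_⟩
    filter_upwards [eventually_ge_atTop 0] with t ht
    simp [ht]
  obtain ⟨L, hL⟩ := hq'.bound
  rw [eventually_atTop] at hL
  obtain ⟨N, hN⟩ := hL
  rw [Metric.tendsto_atTop]
  intro ε hε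
  -- On a window of length `δ`, `q` drops by at most `ε / 4`.
  set δ := ε / (4 * (|L| + 1)) with hδ
  have hδ0 : 0 < δ := by positivity
  have hLδ : |L| * δ ≤ ε / 4 := by
    rw [hδ, mul_div_assoc', div_le_div_iff₀ (by positivity) (by positivity)]
    nlinarith [abs_nonneg L]
  have hdiff : Tendsto (fun t => V t - V (t + δ)) atTop (𝓝 0) := by
    simpa using hv.sub (hv.comp (tendsto_atTop_add_const_right atTop δ tendsto_id))
  have hev : ∀ᶠ t in atTop, V t - V (t + δ) < c * (ε / 4) * δ :=
    hdiff.eventually_lt_const (by positivity)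
  obtain ⟨N', hN'⟩ := eventually_atTop.1 hev
  refine ⟨max (max N N') 0, fun t ht => ?_⟩
  have ht0 : 0 ≤ t := (le_max_right _ _).trans ht
  have htN : N ≤ t := ((le_max_left _ _).trans (le_max_left _ _)).trans ht
  have htN' : N' ≤ t := ((le_max_right _ _).trans (le_max_left _ _)).trans ht
  have hqt : ∀ τ ∈ Set.Icc t (t + δ), q t - ε / 4 ≤ q τ := fun τ hτ => by
    have h1 := abs_increment_le hq ht0 hτ.1 (c := |L|) fun r hr => by
      have := hN r (htN.trans hr.1)
      simp only [norm_one, mul_one, Real.norm_eq_abs] at this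
      exact this.trans (le_abs_self L)
    have h2 : |L| * (τ - t) ≤ |L| * δ :=
      mul_le_mul_of_nonneg_left (by linarith [hτ.2]) (abs_nonneg L)
    linarith [(abs_le.1 h1).1]
  have h3 := mul_le_increment (fun t ht => (hV t ht).neg) ht0 (by linarith : t ≤ t + δ)
    (c := c * (q t - ε / 4)) fun τ hτ => by
      have h1 := hVq τ (ht0.trans hτ.1)
      have h2 := mul_le_mul_of_nonneg_left (hqt τ hτ) hc.le
      linarith
  simp only [Pi.neg_apply, add_sub_cancel_left] at h3
  have h4 := hN' t htN'
  have h5 : c * δ * (q t - ε / 4) < c * δ * (ε / 4) := by linarith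
  have h6 := lt_of_mul_lt_mul_left h5 (by positivity)
  rw [Real.dist_eq, sub_zero, abs_of_nonneg (hq0 t ht0)]
  linarith

/-! ### Quadratic forms -/

/-- Coercivity of a positive definite form, with constant its minimum on the (compact) unit sphere of
the sup norm. -/
theorem posDef_coercive {k : ℕ} {K : Matrix (Fin k) (Fin k) ℝ} (hK : K.PosDef) :
    ∃ c > 0, ∀ (x : Fin k → ℝ) a, c * x a ^ 2 ≤ x ⬝ᵥ K *ᵥ x := by
  rcases Nat.eq_zero_or_pos k with rfl | hk
  · exact ⟨1, one_pos, fun x a => a.elim0⟩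
  have : Nonempty (Fin k) := ⟨⟨0, hk⟩⟩
  have hcont : Continuous fun x : Fin k → ℝ => x ⬝ᵥ K *ᵥ x := by
    simp only [dotProduct, mulVec]; fun_prop
  obtain ⟨z, hz, hmin⟩ := (isCompact_sphere (0 : Fin k → ℝ) 1).exists_isMinOn
    (NormedSpace.sphere_nonempty.2 zero_le_one) hcont.continuousOn
  have hz0 : z ≠ 0 := by
    rintro rfl; simp at hz
  have hpos := hK.dotProduct_mulVec_pos hz0
  simp only [star_trivial] at hpos
  refine ⟨_, hpos, fun x a => ?_⟩
  by_cases hx : x = 0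
  · simp [hx]
  have hn : 0 < ‖x‖ := norm_pos_iff.2 hx
  have h1 : z ⬝ᵥ K *ᵥ z ≤ (‖x‖⁻¹ • x) ⬝ᵥ K *ᵥ (‖x‖⁻¹ • x) :=
    hmin (by simp [norm_smul, hn.ne'])
  simp only [mulVec_smul, dotProduct_smul, smul_dotProduct, smul_eq_mul] at h1
  have h2 : x a ^ 2 ≤ ‖x‖ ^ 2 := by
    rw [← sq_abs]
    exact pow_le_pow_left₀ (abs_nonneg _) (norm_le_pi_norm x a) 2
  calc _ ≤ (z ⬝ᵥ K *ᵥ z) * ‖x‖ ^ 2 := mul_le_mul_of_nonneg_left h2 hpos.le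
    _ ≤ (‖x‖⁻¹ * (‖x‖⁻¹ * (x ⬝ᵥ K *ᵥ x))) * ‖x‖ ^ 2 :=
      mul_le_mul_of_nonneg_right h1 (by positivity)
    _ = _ := by field_simp

/-- The quadratic form of the Gram integral is the energy of `W x` over the window. -/
theorem gramInt_quadratic {p m : ℕ} {W : ℝ → Matrix (Fin p) (Fin m) ℝ} {t T : ℝ}
    (hW : ∀ a b, ContinuousOn (fun τ => W τ a b) (Set.uIcc t (t + T))) (x : Fin m → ℝ) :
    x ⬝ᵥ gramInt W t T *ᵥ x = ∫ τ in t..(t + T), (W τ *ᵥ x) ⬝ᵥ (W τ *ᵥ x) := by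
  have hc : ∀ a b, ContinuousOn (fun τ => ((W τ)ᵀ * W τ) a b) (Set.uIcc t (t + T)) := by
    intro a b
    simp only [mul_apply, transpose_apply]
    exact continuousOn_finsetSum _ fun j _ => (hW j a).mul (hW j b)
  have h1 : ∀ τ, (W τ *ᵥ x) ⬝ᵥ (W τ *ᵥ x) = ∑ a, ∑ b, x a * (((W τ)ᵀ * W τ) a b * x b) := by
    intro τ
    have : (W τ *ᵥ x) ⬝ᵥ (W τ *ᵥ x) = x ⬝ᵥ ((W τ)ᵀ * W τ) *ᵥ x := by
      rw [← mulVec_mulVec, dotProduct_mulVec x, vecMul_transpose]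
    rw [this]
    simp only [dotProduct, mulVec, Finset.mul_sum]
  simp only [h1]
  rw [intervalIntegral.integral_finsetSum]
  · simp only [dotProduct, mulVec, Finset.mul_sum]
    refine Finset.sum_congr rfl fun a _ => ?_
    rw [intervalIntegral.integral_finsetSum]
    · refine Finset.sum_congr rfl fun b _ => ?_
      rw [intervalIntegral.integral_const_mul, intervalIntegral.integral_mul_const]
      rfl
    · intro b _
      exact (((hc a b).mul continuousOn_const).const_mul (x a) |>.intervalIntegrable)
  · intro a _
    exact ContinuousOn.intervalIntegrable <| continuousOn_finsetSum _ fun b _ =>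
      continuousOn_const.mul ((hc a b).mul continuousOn_const)

/-- Entries of a symmetric `0 ⪯ H ⪯ M I` are at most `M` in absolute value: test `H ⪰ 0` on
`e_a ± e_b` and use that the diagonal entries are at most `M`. -/
theorem abs_entry_le_s5 {k : ℕ} {H : Matrix (Fin k) (Fin k) ℝ} {μ M : ℝ} (hμ : 0 < μ)
    (hs : H.IsSymm) (hlb : (H - μ • 1).PosSemidef)
    (hub : ((M • 1 : Matrix (Fin k) (Fin k) ℝ) - H).PosSemidef) (a b : Fin k) :
    |H a b| ≤ M := by
  have hlow : ∀ x : Fin k → ℝ, 0 ≤ x ⬝ᵥ H *ᵥ x := fun x => by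
    have h := hlb.dotProduct_mulVec_nonneg x
    simp only [star_trivial, sub_mulVec, smul_mulVec, one_mulVec, dotProduct_sub,
      dotProduct_smul, smul_eq_mul] at h
    have : 0 ≤ μ * (x ⬝ᵥ x) := mul_nonneg hμ.le (Finset.sum_nonneg fun i _ => mul_self_nonneg _)
    linarith
  have hd : ∀ a, H a a ≤ M := fun a => by
    have := hub.diag_nonneg (i := a)
    simp at this
    linarith
  have h1 := hlow (Pi.single a 1 + Pi.single b 1)
  have h2 := hlow (Pi.single a 1 - Pi.single b 1)
  have h3 := hs.apply a b
  simp [mulVec_add, mulVec_sub, h3] at h1 h2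
  have := hd a
  have := hd b
  rw [abs_le]; constructor <;> linarith

theorem dotProduct_self_real_nonneg {k : ℕ} (x : Fin k → ℝ) : 0 ≤ x ⬝ᵥ x :=
  Finset.sum_nonneg fun _ _ => mul_self_nonneg _

theorem sq_le_dotProduct_self {k : ℕ} (x : Fin k → ℝ) (a : Fin k) : x a ^ 2 ≤ x ⬝ᵥ x := by
  rw [sq]
  exact Finset.single_le_sum (f := fun a => x a * x a) (fun _ _ => mul_self_nonneg _)
    (Finset.mem_univ a)

theorem quadratic_lower {k : ℕ} {H : Matrix (Fin k) (Fin k) ℝ} {μ : ℝ}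
    (hlb : (H - μ • 1).PosSemidef) (x : Fin k → ℝ) : μ * (x ⬝ᵥ x) ≤ x ⬝ᵥ H *ᵥ x := by
  have h := hlb.dotProduct_mulVec_nonneg x
  simp only [star_trivial, sub_mulVec, smul_mulVec, one_mulVec, dotProduct_sub,
    dotProduct_smul, smul_eq_mul] at h
  linarith

/-- If `H ⪰ μ I` then `μ |x| ≤ |H x|`; follows from `|H x - μ x|² ≥ 0`. -/
theorem dotProduct_self_le_of_mulVec {k : ℕ} {H : Matrix (Fin k) (Fin k) ℝ} {μ : ℝ} (hμ : 0 < μ)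
    (hlb : (H - μ • 1).PosSemidef) (x : Fin k → ℝ) :
    μ ^ 2 * (x ⬝ᵥ x) ≤ (H *ᵥ x) ⬝ᵥ (H *ᵥ x) := by
  have h := quadratic_lower hlb x
  have h2 := dotProduct_self_real_nonneg (H *ᵥ x - μ • x)
  simp only [sub_dotProduct, dotProduct_sub, smul_dotProduct, dotProduct_smul, smul_eq_mul,
    dotProduct_comm (H *ᵥ x) x] at h2
  nlinarith

theorem isBigO_one_of_sq_le {X : Type} {l : Filter X} {f : X → ℝ} {B : ℝ}
    (h : ∀ᶠ x in l, f x ^ 2 ≤ B) : f =O[l] fun _ => (1 : ℝ) := by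
  refine IsBigO.of_bound (B + 1) ?_
  filter_upwards [h] with x hx
  rw [norm_one, mul_one, Real.norm_eq_abs]
  rw [← sq_abs] at hx
  nlinarith [sq_nonneg (|f x| - 1)]

theorem isBigO_one_of_abs_le {f : ℝ → ℝ} {B : ℝ}
    (h : ∀ t, 0 ≤ t → |f t| ≤ B) : f =O[atTop] fun _ => (1 : ℝ) := by
  refine IsBigO.of_bound B ?_
  filter_upwards [eventually_ge_atTop 0] with t ht
  simpa using h t ht

/-! ### The convergence theorem -/

/-- Theorem 2 of the paper: multi-robot direct adaptive control with a
common estimate.  For `n` manipulators with error dynamics `H_i ṡ_i + (C_i + K_{D_i}) s_i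
= Y_i ã` and centralized update `ã̇ = −P ∑ᵢ Y_iᵀ s_i`, collective persistency of
excitation of `{Y_1, …, Y_n}` implies `s_i → 0` for each `i` and `ã → 0`. -/
theorem multi_robot_common_estimate_convergence (n nj m : ℕ) (hn : 1 ≤ n)
    (H C : Fin n → ℝ → Matrix (Fin nj) (Fin nj) ℝ)
    (KD : Fin n → Matrix (Fin nj) (Fin nj) ℝ)
    (Y dY : Fin n → ℝ → Matrix (Fin nj) (Fin m) ℝ)
    (P : Matrix (Fin m) (Fin m) ℝ)
    (μ M : ℝ) (hμ : 0 < μ) (hμM : μ ≤ M)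
    (s ds : Fin n → ℝ → Fin nj → ℝ) (at' : ℝ → Fin m → ℝ)
    -- each `H i t` symmetric with `μ I ⪯ H i t ⪯ M I`, continuously differentiable
    (hHsymm : ∀ i t, 0 ≤ t → (H i t).IsSymm)
    (hHlb : ∀ i t, 0 ≤ t → (H i t - μ • 1).PosSemidef)
    (hHub : ∀ i t, 0 ≤ t → ((M • 1 : Matrix (Fin nj) (Fin nj) ℝ) - H i t).PosSemidef)
    (hHd : ∀ i, ∀ t, 0 ≤ t → ∀ a b,
      HasDerivWithinAt (fun τ => H i τ a b) ((C i t + (C i t)ᵀ) a b) (Set.Ici 0) t)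
    -- each `C i` continuous and bounded
    (hCc : ∀ i a b, ContinuousOn (fun t => C i t a b) (Set.Ici 0))
    (hCbd : ∃ c, ∀ i, ∀ t, 0 ≤ t → ∀ a b, |C i t a b| ≤ c)
    -- the gains are symmetric positive definite
    (hKD : ∀ i, (KD i).PosDef) (hP : P.PosDef)
    -- each `Y i` continuously differentiable with `Y i` and `Y i '` bounded
    (hYd : ∀ i, ∀ t, 0 ≤ t → ∀ a b,
      HasDerivWithinAt (fun τ => Y i τ a b) (dY i t a b) (Set.Ici 0) t)
    (hdYc : ∀ i a b, ContinuousOn (fun t => dY i t a b) (Set.Ici 0))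
    (hYbd : ∃ c, ∀ i, ∀ t, 0 ≤ t → ∀ a b, |Y i t a b| ≤ c ∧ |dY i t a b| ≤ c)
    -- closed-loop dynamics with a shared parameter error and centralized update law
    (hs : ∀ i, ∀ t, 0 ≤ t → HasDerivWithinAt (s i) (ds i t) (Set.Ici 0) t)
    (hdyn : ∀ i, ∀ t, 0 ≤ t →
      H i t *ᵥ ds i t + (C i t + KD i) *ᵥ s i t = Y i t *ᵥ at' t)
    (hat : ∀ t, 0 ≤ t →
      HasDerivWithinAt at' (-(P *ᵥ ∑ i, (Y i t)ᵀ *ᵥ s i t)) (Set.Ici 0) t)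
    -- collective persistency of excitation
    (hPE : ∃ T > (0:ℝ), ∃ α > (0:ℝ), CollPEWith Y T α) :
    (∀ i, Tendsto (s i) atTop (𝓝 0)) ∧ Tendsto at' atTop (𝓝 0) := by
  obtain ⟨cC, hcC⟩ := hCbd
  obtain ⟨cY, hcY⟩ := hYbd
  obtain ⟨T, hT, α, hα, hPE⟩ := hPE
  set da : ℝ → Fin m → ℝ := fun t => -(P *ᵥ ∑ i, (Y i t)ᵀ *ᵥ s i t) with hda
  have hPinv : IsUnit P.det := (isUnit_iff_isUnit_det P).1 hP.isUnit
  have hPsymm : P⁻¹ᵀ = P⁻¹ := by simpa using hP.inv.isHermitian.eq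
  obtain ⟨cP, hcP, hPlow⟩ := posDef_coercive hP.inv
  -- Twice the usual energy: `V' = -2 ∑ sᵢᵀ K sᵢ`.
  set V : ℝ → ℝ := fun t => (∑ i, s i t ⬝ᵥ H i t *ᵥ s i t) + at' t ⬝ᵥ P⁻¹ *ᵥ at' t with hVdef
  have hV : ∀ t, 0 ≤ t →
      HasDerivWithinAt V (-(2 * ∑ i, s i t ⬝ᵥ KD i *ᵥ s i t)) (Set.Ici 0) t := by
    intro t ht
    have h1 := HasDerivWithinAt.fun_sum (u := Finset.univ) fun i _ =>
      hasDerivWithinAt_dotProduct (hs i t ht) (hasDerivWithinAt_mulVec (hHd i t ht) (hs i t ht))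
    have h2 := hasDerivWithinAt_dotProduct (hat t ht)
      (hasDerivWithinAt_mulVec (A := fun _ => P⁻¹) (A' := 0)
        (fun a b => hasDerivWithinAt_const _ _ _) (hat t ht))
    refine (h1.add h2).congr_deriv ?_
    have e1 : ∀ i, ds i t ⬝ᵥ H i t *ᵥ s i t + s i t ⬝ᵥ ((C i t + (C i t)ᵀ) *ᵥ s i t + H i t *ᵥ ds i t)
        = 2 * (at' t ⬝ᵥ (Y i t)ᵀ *ᵥ s i t) - 2 * (s i t ⬝ᵥ KD i *ᵥ s i t) := by
      intro i
      have a1 : ds i t ⬝ᵥ H i t *ᵥ s i t = s i t ⬝ᵥ H i t *ᵥ ds i t := by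
        rw [← dotProduct_transpose_mulVec, (hHsymm i t ht).eq]
      have a2 := congrArg (fun v => s i t ⬝ᵥ v) (hdyn i t ht)
      have a3 := dotProduct_transpose_mulVec (C i t) (s i t) (s i t)
      have a4 := dotProduct_transpose_mulVec (Y i t) (at' t) (s i t)
      simp only [add_mulVec, dotProduct_add] at a2 ⊢
      linarith
    have e2 : P⁻¹ *ᵥ da t = -∑ i, (Y i t)ᵀ *ᵥ s i t := by
      simp only [hda, mulVec_neg, mulVec_mulVec, nonsing_inv_mul P hPinv, one_mulVec]
    have e3 : da t ⬝ᵥ P⁻¹ *ᵥ at' t = at' t ⬝ᵥ P⁻¹ *ᵥ da t := by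
      rw [← dotProduct_transpose_mulVec, hPsymm]
    simp only [e1, zero_mulVec, zero_add]
    change _ + (da t ⬝ᵥ P⁻¹ *ᵥ at' t + at' t ⬝ᵥ P⁻¹ *ᵥ da t) = _
    rw [e3, e2, dotProduct_neg, dotProduct_sum, Finset.sum_sub_distrib, ← Finset.mul_sum,
      ← Finset.mul_sum]
    ring
  have hsH0 : ∀ i t, 0 ≤ t → 0 ≤ s i t ⬝ᵥ H i t *ᵥ s i t := fun i t ht =>
    (mul_nonneg hμ.le (dotProduct_self_real_nonneg _)).trans (quadratic_lower (hHlb i t ht) _)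
  have hPa0 : ∀ t, 0 ≤ at' t ⬝ᵥ P⁻¹ *ᵥ at' t := fun t => by
    simpa using hP.inv.posSemidef.dotProduct_mulVec_nonneg (at' t)
  have hsK0 : ∀ i t, 0 ≤ s i t ⬝ᵥ KD i *ᵥ s i t := fun i t => by
    simpa using (hKD i).posSemidef.dotProduct_mulVec_nonneg (s i t)
  have hV0 : ∀ t, 0 ≤ t → 0 ≤ V t := fun t ht =>
    add_nonneg (Finset.sum_nonneg fun i _ => hsH0 i t ht) (hPa0 t)
  have hVle : ∀ t, 0 ≤ t → V t ≤ V 0 := fun t ht => by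
    have := mul_le_increment (fun t ht => (hV t ht).neg) le_rfl ht (c := 0) fun τ _ => by
      have := Finset.sum_nonneg fun i (_ : i ∈ Finset.univ) => hsK0 i τ
      linarith
    simp only [Pi.neg_apply] at this
    linarith
  have hsB : ∀ i a, (fun t => s i t a) =O[atTop] fun _ => (1 : ℝ) := fun i a => by
    refine isBigO_one_of_sq_le (B := V 0 / μ) ?_
    filter_upwards [eventually_ge_atTop 0] with t ht
    rw [le_div_iff₀ hμ]
    have h1 := mul_le_mul_of_nonneg_left (sq_le_dotProduct_self (s i t) a) hμ.le
    have h2 := quadratic_lower (hHlb i t ht) (s i t)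
    have h3 := Finset.single_le_sum (fun i _ => hsH0 i t ht) (Finset.mem_univ i)
    have h4 := hVle t ht
    have h5 := hPa0 t
    simp only [hVdef] at h4 h3 ⊢
    linarith
  have haB : ∀ a, (fun t => at' t a) =O[atTop] fun _ => (1 : ℝ) := fun a => by
    refine isBigO_one_of_sq_le (B := V 0 / cP) ?_
    filter_upwards [eventually_ge_atTop 0] with t ht
    rw [le_div_iff₀ hcP]
    have h1 := hPlow (at' t) a
    have h3 := Finset.sum_nonneg fun i (_ : i ∈ Finset.univ) => hsH0 i t ht
    have h4 := hVle t ht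
    simp only [hVdef] at h4 h3 ⊢
    linarith
  have hYB : ∀ i a b, (fun t => Y i t a b) =O[atTop] fun _ => (1 : ℝ) := fun i a b =>
    isBigO_one_of_abs_le fun t ht => (hcY i t ht a b).1
  have hdYB : ∀ i a b, (fun t => dY i t a b) =O[atTop] fun _ => (1 : ℝ) := fun i a b =>
    isBigO_one_of_abs_le fun t ht => (hcY i t ht a b).2
  have hCB : ∀ i a b, (fun t => C i t a b) =O[atTop] fun _ => (1 : ℝ) := fun i a b =>
    isBigO_one_of_abs_le fun t ht => hcC i t ht a b
  have hHB : ∀ i a b, (fun t => H i t a b) =O[atTop] fun _ => (1 : ℝ) := fun i a b =>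
    isBigO_one_of_abs_le fun t ht =>
      abs_entry_le_s5 hμ (hHsymm i t ht) (hHlb i t ht) (hHub i t ht) a b
  -- `H_i ds_i` is bounded by the dynamics, and `H_i ⪰ μ I` transfers this to `ds_i`.
  have hdsB : ∀ i a, (fun t => ds i t a) =O[atTop] fun _ => (1 : ℝ) := fun i a => by
    have hrB : ∀ a, (fun t => (H i t *ᵥ ds i t) a) =O[atTop] fun _ => (1 : ℝ) := fun a => by
      have h1 := (mulVec_bdd (hYB i) haB a).sub
        (mulVec_bdd (A := fun t => C i t + KD i)
          (fun a b => (hCB i a b).add (isBigO_const_const _ one_ne_zero _)) (hsB i) a)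
      refine h1.congr' ?_ EventuallyEq.rfl
      filter_upwards [eventually_ge_atTop 0] with t ht
      rw [← hdyn i t ht, Pi.add_apply, add_sub_cancel_right]
    obtain ⟨B, hB⟩ := (dot_bdd hrB hrB).bound
    refine isBigO_one_of_sq_le (B := B / μ ^ 2) ?_
    filter_upwards [hB, eventually_ge_atTop 0] with t hB ht
    rw [le_div_iff₀ (by positivity)]
    have h1 := dotProduct_self_le_of_mulVec hμ (hHlb i t ht) (ds i t)
    have h2 := mul_le_mul_of_nonneg_left (sq_le_dotProduct_self (ds i t) a) (sq_nonneg μ)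
    have h3 := (le_abs_self _).trans hB
    rw [norm_one, mul_one] at h3
    linarith
  have hs0 : ∀ i a, Tendsto (fun t => s i t a) atTop (𝓝 0) := by
    intro i a
    obtain ⟨c, hc, hK⟩ := posDef_coercive (hKD i)
    have hd := fun t ht => (hasDerivWithinAt_pi.1 (hs i t ht) a).pow 2
    have h := barbalat hc hV hd hV0 (fun t _ => sq_nonneg (s i t a)) (fun t ht => ?_) ?_
    · have := h.sqrt
      simp only [Pi.pow_apply, Real.sqrt_sq_eq_abs, Real.sqrt_zero] at this
      exact (tendsto_zero_iff_abs_tendsto_zero _).2 this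
    · have h1 := hK (s i t) a
      have h3 := Finset.single_le_sum (fun i _ => hsK0 i t) (Finset.mem_univ i)
      have h0 := hsK0 i t
      simp only [Pi.pow_apply]
      linarith
    · simpa using ((hsB i a).const_mul_left 2).mul (hdsB i a)
  refine ⟨fun i => tendsto_pi_nhds.2 (hs0 i), ?_⟩
  have hso : ∀ i a, (fun t => s i t a) =o[atTop] fun _ => (1 : ℝ) := fun i a =>
    (isLittleO_one_iff ℝ).2 (hs0 i a)
  have hdao : ∀ a, (fun t => da t a) =o[atTop] fun _ => (1 : ℝ) := fun a => by
    refine (mulVec_small (A := fun _ => P) (v := fun t => ∑ i, (Y i t)ᵀ *ᵥ s i t)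
      (fun a b => isBigO_const_const _ one_ne_zero _) (fun b => ?_) a).neg_left
    simp only [Finset.sum_apply]
    exact sum_small fun i => mulVec_small (A := fun t => (Y i t)ᵀ) (fun a b => hYB i b a) (hso i) b
  have hHso : ∀ i a, (fun t => (H i t *ᵥ s i t) a) =o[atTop] fun _ => (1 : ℝ) := fun i =>
    mulVec_small (hHB i) (hso i)
  have hYaB : ∀ i a, (fun t => (Y i t *ᵥ at' t) a) =O[atTop] fun _ => (1 : ℝ) := fun i =>
    mulVec_bdd (hYB i) haB
  -- The cross term `w` has derivative `∑ |Y_i ã|² + e`, with `e` vanishing as `s` does.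
  set w : ℝ → ℝ := fun t => ∑ i, (H i t *ᵥ s i t) ⬝ᵥ (Y i t *ᵥ at' t) with hw
  set e : ℝ → ℝ := fun t => ∑ i, (((C i t)ᵀ *ᵥ s i t - KD i *ᵥ s i t) ⬝ᵥ (Y i t *ᵥ at' t)
    + (H i t *ᵥ s i t) ⬝ᵥ (dY i t *ᵥ at' t + Y i t *ᵥ da t)) with he
  have hwd : ∀ t, 0 ≤ t → HasDerivWithinAt w
      ((∑ i, (Y i t *ᵥ at' t) ⬝ᵥ (Y i t *ᵥ at' t)) + e t) (Set.Ici 0) t := by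
    intro t ht
    have h1 := HasDerivWithinAt.fun_sum (u := Finset.univ) fun i _ =>
      hasDerivWithinAt_dotProduct (hasDerivWithinAt_mulVec (hHd i t ht) (hs i t ht))
        (hasDerivWithinAt_mulVec (hYd i t ht) (hat t ht))
    refine h1.congr_deriv ?_
    rw [he, ← Finset.sum_add_distrib]
    refine Finset.sum_congr rfl fun i _ => ?_
    have a2 := congrArg (fun v => v ⬝ᵥ (Y i t *ᵥ at' t)) (hdyn i t ht)
    simp only [add_mulVec, add_dotProduct, sub_dotProduct] at a2 ⊢
    linarith
  have hw0 : w =o[atTop] fun _ => (1 : ℝ) := by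
    exact sum_small fun i => dot_small (hHso i) (hYaB i)
  have he0 : e =o[atTop] fun _ => (1 : ℝ) := by
    refine sum_small fun i => IsLittleO.add (dot_small (fun a => ?_) (hYaB i))
      (dot_small (hHso i) fun a => ?_)
    · exact (mulVec_small (A := fun t => (C i t)ᵀ) (fun a b => hCB i b a) (hso i) a).sub
        (mulVec_small (A := fun _ => KD i) (fun a b => isBigO_const_const _ one_ne_zero _)
          (hso i) a)
    · exact (mulVec_bdd (hdYB i) haB a).add
        (mulVec_bdd (hYB i) (fun a => (hdao a).isBigO) a)
  -- Asymptotics uniform over the window: `x = (t, σ)` with `t → ∞` and `σ ∈ [0, T]`.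
  set l : Filter (ℝ × ℝ) := atTop ×ˢ 𝓟 (Set.Icc 0 T) with hl
  have hfst : Tendsto (fun x : ℝ × ℝ => x.1) l atTop := tendsto_fst
  have hadd : Tendsto (fun x : ℝ × ℝ => x.1 + x.2) l atTop := by
    refine tendsto_atTop_mono' l ?_ hfst
    exact eventually_prod_principal_iff.2 (Eventually.of_forall fun t σ hσ => by
      simpa using hσ.1)
  have hxo : ∀ b, (fun x : ℝ × ℝ => (at' x.1 - at' (x.1 + x.2)) b) =o[l] fun _ => (1 : ℝ) := by
    intro b
    refine IsLittleO.of_bound fun ε hε => eventually_prod_principal_iff.2 ?_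
    have h1 := (hdao b).bound (div_pos hε hT)
    obtain ⟨N, hN⟩ := eventually_atTop.1 h1
    filter_upwards [eventually_ge_atTop (max N 0)] with t ht σ hσ
    have h2 := abs_increment_le (fun t ht => hasDerivWithinAt_pi.1 (hat t ht) b)
      ((le_max_right _ _).trans ht) (by linarith [hσ.1] : t ≤ t + σ) (c := ε / T) fun τ hτ => by
        simpa [hda] using hN τ (((le_max_left _ _).trans ht).trans hτ.1)
    have h3 : ε / T * σ ≤ ε := by
      calc ε / T * σ ≤ ε / T * T := mul_le_mul_of_nonneg_left hσ.2 (by positivity)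
        _ = ε := by field_simp
    rw [add_sub_cancel_left] at h2
    rw [norm_one, mul_one, Pi.sub_apply, norm_sub_rev]
    exact h2.trans h3
  -- The summand is `|Y_i(t+σ) ã(t)|² - |Y_i(t+σ) ã(t+σ)|²`, factored as a difference of squares:
  -- freezing `ã` at the left end of the window changes the integrand only by `o(1)`.
  have hGo : (fun x : ℝ × ℝ => (∑ i, (Y i (x.1 + x.2) *ᵥ (at' x.1 - at' (x.1 + x.2))) ⬝ᵥ
      (Y i (x.1 + x.2) *ᵥ at' x.1 + Y i (x.1 + x.2) *ᵥ at' (x.1 + x.2))) - e (x.1 + x.2))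
      =o[l] fun _ => (1 : ℝ) := by
    have hY : ∀ i a b, (fun x : ℝ × ℝ => Y i (x.1 + x.2) a b) =O[l] fun _ => (1 : ℝ) :=
      fun i a b => (hYB i a b).comp_tendsto hadd
    refine IsLittleO.sub ?_ (he0.comp_tendsto hadd)
    exact sum_small fun i => dot_small (mulVec_small (hY i) hxo) fun a =>
      (mulVec_bdd (hY i) (fun b => (haB b).comp_tendsto hfst) a).add
        (mulVec_bdd (hY i) (fun b => (haB b).comp_tendsto hadd) a)
  have hkey : ∀ ε > 0, ∀ᶠ t in atTop, α * (at' t ⬝ᵥ at' t) ≤ T⁻¹ * (w (t + T) - w t) + ε := by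
    intro ε hε
    filter_upwards [eventually_prod_principal_iff.1 (hGo.bound hε), eventually_ge_atTop 0]
      with t hG ht
    have hcY : ∀ i a b, ContinuousOn (fun τ => Y i τ a b) (Set.Icc t (t + T)) := fun i a b τ hτ =>
      ((hYd i τ (ht.trans hτ.1) a b).continuousWithinAt).mono fun r hr => ht.trans hr.1
    have hcq : ∀ i, ContinuousOn (fun τ => (Y i τ *ᵥ at' t) ⬝ᵥ (Y i τ *ᵥ at' t))
        (Set.Icc t (t + T)) := fun i => by
      simp only [dotProduct, mulVec]
      have : ∀ a, ContinuousOn (fun τ => ∑ b, Y i τ a b * at' t b) (Set.Icc t (t + T)) :=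
        fun a => continuousOn_finsetSum _ fun b _ => (hcY i a b).mul continuousOn_const
      exact continuousOn_finsetSum _ fun a _ => (this a).mul (this a)
    have huIcc : Set.uIcc t (t + T) = Set.Icc t (t + T) := Set.uIcc_of_le (by linarith)
    have h1 := integral_le_increment hwd ht (by linarith : t ≤ t + T)
      (φ := fun τ => (∑ i, (Y i τ *ᵥ at' t) ⬝ᵥ (Y i τ *ᵥ at' t)) - ε)
      ((continuousOn_finsetSum _ fun i _ => hcq i).sub continuousOn_const) fun τ hτ => by
        have h2 := (le_abs_self _).trans (hG (τ - t) ⟨by linarith [hτ.1], by linarith [hτ.2]⟩)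
        simp only [add_sub_cancel, norm_one, mul_one] at h2
        have h3 : ∀ i, (Y i τ *ᵥ (at' t - at' τ)) ⬝ᵥ (Y i τ *ᵥ at' t + Y i τ *ᵥ at' τ) =
            (Y i τ *ᵥ at' t) ⬝ᵥ (Y i τ *ᵥ at' t) - (Y i τ *ᵥ at' τ) ⬝ᵥ (Y i τ *ᵥ at' τ) := by
          intro i
          rw [mulVec_sub, sub_dotProduct, dotProduct_add, dotProduct_add,
            dotProduct_comm (Y i τ *ᵥ at' τ) (Y i τ *ᵥ at' t)]
          ring
        simp only [h3, Finset.sum_sub_distrib] at h2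
        linarith
    rw [intervalIntegral.integral_sub, intervalIntegral.integral_finsetSum] at h1
    rotate_left
    · exact fun i _ => ContinuousOn.intervalIntegrable (huIcc ▸ hcq i)
    · exact ContinuousOn.intervalIntegrable
        (huIcc ▸ continuousOn_finsetSum _ fun i _ => hcq i)
    · exact intervalIntegrable_const
    simp only [← fun i => gramInt_quadratic (huIcc ▸ hcY i) (at' t),
      intervalIntegral.integral_const, add_sub_cancel_left, smul_eq_mul] at h1
    have h2 := (hPE t ht).dotProduct_mulVec_nonneg (at' t)
    simp only [star_trivial, sub_mulVec, smul_mulVec, one_mulVec, dotProduct_sub,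
      dotProduct_smul, smul_eq_mul, sum_mulVec, dotProduct_sum] at h2
    have h3 := mul_le_mul_of_nonneg_left h1 (inv_pos.2 hT).le
    rw [mul_sub, inv_mul_cancel_left₀ hT.ne'] at h3
    linarith
  have hw1 : Tendsto (fun t => T⁻¹ * (w (t + T) - w t)) atTop (𝓝 0) := by
    have h := (isLittleO_one_iff ℝ).1 hw0
    simpa using ((h.comp (tendsto_atTop_add_const_right atTop T tendsto_id)).sub h).const_mul T⁻¹
  refine tendsto_pi_nhds.2 fun a => ?_
  have hsq : Tendsto (fun t => at' t a ^ 2) atTop (𝓝 0) := by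
    rw [Metric.tendsto_nhds]
    intro ε hε
    filter_upwards [hkey (α * ε / 2) (by positivity),
      hw1.eventually_lt_const (by positivity : 0 < α * ε / 2)] with t h1 h2
    rw [Real.dist_eq, sub_zero, abs_of_nonneg (sq_nonneg _)]
    refine (sq_le_dotProduct_self (at' t) a).trans_lt (lt_of_mul_lt_mul_left ?_ hα.le)
    linarith
  have := hsq.sqrt
  simp only [Real.sqrt_sq_eq_abs, Real.sqrt_zero] at this
  exact (tendsto_zero_iff_abs_tendsto_zero _).2 this
end
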